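/- arXiv:1211.4301 — 3 statements merged into one kernel-verified Lean document; each statement's English description precedes it below -/
import Mathlib

section
/- Let I ⊆ R = K[A] be a square-free monomial ideal with μ minimal generators whose labeled hypergraph H(I) = (V, X, E, 𝓔) is saturated. Then reg(R/I) = |X| − |V| and pd(R/I) = |V|, where |X| is the number of variables appearing among the generators and |V| = μ. -/
/-!
The Koszul homology `H_i(R/I)_d` (`i` the homological degree, `d` the degree of the coefficients, so
that the internal degree is `j = i + d`) of a saturated ideal with `n` generators in `|X|`
variables is confined to `i ≤ n`, `d ≤ |X| - n`, and is nonzero at the corner `i = n`,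
`d = |X| - n`. Both formulas follow, since `d = j - i`.

This is proved by induction on `n` (`SatKoszul.main`). Remove a generator `f` from `I`, leaving `I'`.
The colon ideal `J = I' : f` is generated by the `S \ f` for the remaining supports `S`
(`mul_mem_iff`). Private variables of the other generators do not lie in `f`, so `I'` and `J` are
both saturated with `n - 1` generators; moreover `|X(J)| = |X| - deg f`, and `|X(I')| < |X|` because
`f` has a private variable. The exact sequence `0 → R/J → R/I' → R/I → 0`, whose first map is
multiplication by `f`, gives
`H_i(R/I')_d → H_i(R/I)_d → H_{i-1}(R/J)_{d+1-deg f} → H_{i-1}(R/I')_{d+1}`.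
Exactness at the second term (`les_vanish`) yields the bounds for `I`. At `i = n`, `d = |X| - n` the
last term vanishes by the bounds for `I'`, so the connecting map is onto the corner homology of `J`
(`les_ne`), which is nonzero by induction.

The case `n = 0` is the acyclicity of the Koszul complex of the polynomial ring, in any
characteristic: `homotopy` gives, for each variable `a`, a chain homotopy (wedge with `e_a`, divide by
`a`) between the identity and the projection onto the part not involving `a`; composing these over
all variables leaves only constants in homological degree `0` (`base_vanish`).

Quotients are avoided by computing with polynomial representatives modulo `I`; `bettiNe_iff`
translates from the Koszul complex with coefficients in `R/I`.
-/

/-!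
Common setup: square-free monomial ideals in `R = K[A]` (here `MvPolynomial σ K`
with `σ` the finite alphabet `A`), encoded by the finite antichain `G` of
supports of their minimal monomial generators; the labeled hypergraph `H(I)`
of such an ideal, whose vertex set is (in bijection with) `G` and whose edge
labeled by a variable `a` is `E_a = { S ∈ G : a ∈ S }`; and Castelnuovo–Mumford
regularity and projective dimension of `R/I`, defined via graded Betti numbers
`β_{ij}(R/I) = dim_K Tor_i^R(R/I, K)_j`, which are computed from the Koszul
complex of the variables tensored with `R/I`.
-/

open MvPolynomial Finset
open scoped Classical

namespace SqfreeHyp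

variable (σ : Type) [Fintype σ] [LinearOrder σ] (K : Type) [Field K]

/-- The square-free monomial `∏_{a ∈ S} a`. -/
noncomputable def sqMon (S : Finset σ) : MvPolynomial σ K := ∏ a ∈ S, X a

/-- The square-free monomial ideal whose (minimal) monomial generators have
supports exactly the members of `G`. -/
noncomputable def monIdeal (G : Finset (Finset σ)) : Ideal (MvPolynomial σ K) :=
  Ideal.span ((fun S => sqMon σ K S) '' (G : Set (Finset σ)))

/-- `G` is an antichain under inclusion (= divisibility of the square-free
monomials): the corresponding monomial generating set is minimal. -/
def MinGens (G : Finset (Finset σ)) : Prop := ∀ S ∈ G, ∀ T ∈ G, S ⊆ T → S = T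

/-- `E_a`: the edge of the labeled hypergraph `H(I)` labeled by the variable `a`,
consisting of the (vertices corresponding to the) generators divisible by `a`. -/
def EdgeOf (G : Finset (Finset σ)) (a : σ) : Finset (Finset σ) :=
  G.filter (fun S => a ∈ S)

/-- The set `𝓔` of (nonempty) edges of the labeled hypergraph. -/
noncomputable def edgeSet (G : Finset (Finset σ)) : Finset (Finset (Finset σ)) :=
  (Finset.univ.image (EdgeOf σ G)).filter (· ≠ ∅)

/-- `X`: the set of variables appearing among the generators (the labels). -/
def varsOf (G : Finset (Finset σ)) : Finset σ := G.biUnion id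

/-- A vertex is closed if its singleton is an edge. -/
def Closed (G : Finset (Finset σ)) (v : Finset σ) : Prop :=
  ∃ a : σ, EdgeOf σ G a = {v}

/-- The neighbors `N_H(v)` of a vertex: the other vertices sharing an edge with `v`. -/
noncomputable def Neighbors (G : Finset (Finset σ)) (v : Finset σ) : Finset (Finset σ) :=
  G.filter (fun w => w ≠ v ∧ ∃ a : σ, v ∈ EdgeOf σ G a ∧ w ∈ EdgeOf σ G a)

/-- The open (= not closed) vertices. -/
noncomputable def openVerts (G : Finset (Finset σ)) : Finset (Finset σ) :=
  G.filter (fun v => ¬ Closed σ G v)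

/-- The minimal members of a family of supports (used to pass to the minimal
monomial generating sets of colon ideals and sums). -/
def minimalize (A : Finset (Finset σ)) : Finset (Finset σ) :=
  A.filter (fun S => ∀ T ∈ A, T ⊆ S → T = S)

/-- An edge is simple if it has at least two vertices and has no proper
subedge besides `∅`. -/
def SimpleEdge (G : Finset (Finset σ)) (F : Finset (Finset σ)) : Prop :=
  F ∈ edgeSet σ G ∧ 2 ≤ F.card ∧ ∀ F' ∈ edgeSet σ G, F' ⊆ F → F' = F

/-- The set of simple edges. -/
noncomputable def simpleEdges (G : Finset (Finset σ)) : Finset (Finset (Finset σ)) :=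
  (edgeSet σ G).filter (fun F => SimpleEdge σ G F)

/-- `H(I)` has isolated simple edges: every open vertex is contained in
exactly one simple edge. -/
def HasIsolatedSimpleEdges (G : Finset (Finset σ)) : Prop :=
  ∀ v ∈ G, ¬ Closed σ G v → ∃! F : Finset (Finset σ), SimpleEdge σ G F ∧ v ∈ F

/-! ### Regularity via graded Betti numbers.
`β_{ij}(R/I) = dim_K Tor_i^R(R/I,K)_j` where `Tor` is computed by the Koszul
complex on the variables of `R` tensored with `R/I`; its `i`-th term has basis
indexed by `i`-element subsets of the variables, with coefficients in `R/I`. -/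

/-- Index of the degree-`i` term of the Koszul complex. -/
abbrev KT (i : ℕ) : Type _ := {T : Finset σ // T.card = i}

/-- The Koszul differential on `K_•(x_a : a) ⊗ R/I`. -/
noncomputable def kd (I : Ideal (MvPolynomial σ K)) (i : ℕ)
    (c : KT σ i →₀ (MvPolynomial σ K ⧸ I)) :
    KT σ (i - 1) →₀ (MvPolynomial σ K ⧸ I) :=
  c.sum fun T m => ∑ a ∈ T.1.attach,
    ((-1 : ℤ) ^ ((T.1.filter (fun b => b < a.1)).card)) •
      Finsupp.single
        (⟨T.1.erase a.1, by rw [Finset.card_erase_of_mem a.2, T.2]⟩ : KT σ (i - 1))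
        ((X a.1 : MvPolynomial σ K) • m)

/-- `c` is homogeneous of internal degree `j` (each coefficient at a size-`i`
subset is the class of a homogeneous polynomial of degree `j - i`). -/
def IsHomogEl (I : Ideal (MvPolynomial σ K)) (i j : ℕ)
    (c : KT σ i →₀ (MvPolynomial σ K ⧸ I)) : Prop :=
  ∀ T : KT σ i, ∃ p : MvPolynomial σ K,
    p.IsHomogeneous (j - i) ∧ Ideal.Quotient.mk I p = c T

/-- The graded Betti number `β_{ij}(R/I)` is nonzero: there is a homogeneous
cycle of internal degree `j` in homological degree `i` of the Koszul complex
tensored with `R/I` which is not a boundary. -/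
def BettiNe (I : Ideal (MvPolynomial σ K)) (i j : ℕ) : Prop :=
  ∃ c : KT σ i →₀ (MvPolynomial σ K ⧸ I),
    IsHomogEl σ K I i j c ∧ kd σ K I i c = 0 ∧
    ∀ b : KT σ (i + 1) →₀ (MvPolynomial σ K ⧸ I), kd σ K I (i + 1) b ≠ c

/-- Castelnuovo–Mumford regularity of `R/I`: `max { j - i : β_{ij}(R/I) ≠ 0 }`. -/
noncomputable def reg (I : Ideal (MvPolynomial σ K)) : ℤ :=
  sSup { d : ℤ | ∃ i j : ℕ, BettiNe σ K I i j ∧ d = (j : ℤ) - (i : ℤ) }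

/-- Projective dimension of `R/I`: `max { i : β_{ij}(R/I) ≠ 0 for some j }`. -/
noncomputable def pdim (I : Ideal (MvPolynomial σ K)) : ℕ :=
  sSup { i : ℕ | ∃ j : ℕ, BettiNe σ K I i j }

end SqfreeHyp

open SqfreeHyp

namespace SatKoszul

set_option linter.unusedSectionVars false

variable {σ : Type} [Fintype σ] [LinearOrder σ] {K : Type} [Field K]

/-! ### Signs and the Koszul differential on polynomial chains -/

/-- Koszul chains with coefficients in `R = K[A]`: all homological degrees at once, the value at
`T` being the coefficient of the basis element `e_T`. Chains over `R/I` are treated as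
`R`-valued chains modulo the pointwise relation of differing by an element of `I`. -/
abbrev Chain (σ K : Type) [Field K] := Finset σ → MvPolynomial σ K

/-- The sign with which `e_T` occurs in the Koszul differential of `e_{T ∪ {a}}`. -/
def sg (a : σ) (T : Finset σ) : ℤ := (-1) ^ (T.filter (fun b => b < a)).card

lemma sg_mul_self (a : σ) (T : Finset σ) : sg a T * sg a T = 1 := by
  unfold sg
  rw [← pow_add, ← two_mul, pow_mul]
  simp

lemma sg_insert_of_lt {a b : σ} {T : Finset σ} (hb : b ∉ T) (h : b < a) :
    sg a (insert b T) = - sg a T := by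
  unfold sg
  rw [Finset.filter_insert, if_pos h, Finset.card_insert_of_notMem (by simp [hb]), pow_succ]
  ring

lemma sg_insert_of_not_lt {a b : σ} {T : Finset σ} (h : ¬ b < a) :
    sg a (insert b T) = sg a T := by
  unfold sg
  rw [Finset.filter_insert, if_neg h]

/-- The anticommutation of signs behind both `∂ ∘ ∂ = 0` and the contracting homotopies. -/
lemma sg_swap {a b : σ} {T : Finset σ} (ha : a ∉ T) (hb : b ∉ T) (hab : a ≠ b) :
    sg b (insert a T) * sg a T = - (sg a (insert b T) * sg b T) := by
  rcases lt_or_gt_of_ne hab with h | h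
  · rw [sg_insert_of_lt ha h, sg_insert_of_not_lt h.not_gt]
    ring
  · rw [sg_insert_of_lt hb h, sg_insert_of_not_lt h.not_gt]
    ring

/-- The Koszul differential, written coefficientwise: the coefficient of `e_T` in `∂ c` collects
the contributions of `e_{T ∪ {a}}` for `a ∉ T`. -/
noncomputable def del (c : Chain σ K) : Chain σ K := fun T =>
  ∑ a ∈ Tᶜ, (sg a T : MvPolynomial σ K) * (X a * c (insert a T))

lemma del_add (b c : Chain σ K) (T : Finset σ) : del (b + c) T = del b T + del c T := by
  simp only [del, Pi.add_apply, mul_add, Finset.sum_add_distrib]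

lemma del_mul (f : MvPolynomial σ K) (c : Chain σ K) (T : Finset σ) :
    del (fun T => f * c T) T = f * del c T := by
  simp only [del, Finset.mul_sum]
  exact Finset.sum_congr rfl fun a _ => by ring

lemma del_sub (b c : Chain σ K) (T : Finset σ) : del (b - c) T = del b T - del c T := by
  simp only [del, Pi.sub_apply, mul_sub, Finset.sum_sub_distrib]

lemma del_mem (I : Ideal (MvPolynomial σ K)) {c : Chain σ K} (h : ∀ T, c T ∈ I)
    (T : Finset σ) : del c T ∈ I :=
  Ideal.sum_mem _ fun _ _ => I.mul_mem_left _ (I.mul_mem_left _ (h _))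

lemma del_del (c : Chain σ K) (T : Finset σ) : del (del c) T = 0 := by
  simp only [del, Finset.mul_sum]
  rw [Finset.sum_sigma']
  refine Finset.sum_involution (fun p _ => ⟨p.2, p.1⟩) ?_ ?_ ?_ ?_
  · rintro ⟨a, b⟩ h
    simp only [Finset.mem_sigma, Finset.mem_compl, Finset.mem_insert, not_or] at h
    obtain ⟨ha, hba, hb⟩ := h
    have h1 := congrArg (Int.cast : ℤ → MvPolynomial σ K) (sg_swap ha hb (Ne.symm hba))
    push_cast at h1
    simp only [Finset.insert_comm a b T] at h1 ⊢
    linear_combination (X a * X b * c (insert b (insert a T))) * h1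
  · rintro ⟨a, b⟩ h _ h2
    simp only [Finset.mem_sigma, Finset.mem_compl, Finset.mem_insert, not_or] at h
    simp only [Sigma.mk.injEq] at h2
    exact h.2.1 h2.1
  · rintro ⟨a, b⟩ h
    simp only [Finset.mem_sigma, Finset.mem_compl, Finset.mem_insert, not_or] at h ⊢
    exact ⟨h.2.2, Ne.symm h.2.1, h.1⟩
  · rintro ⟨a, b⟩ h
    rfl

/-! ### Bigraded Koszul homology -/

/-- `c` is concentrated in homological degree `i`, with coefficients homogeneous of degree `d`
(so its internal degree is `i + d`). -/
def Bihom (i d : ℕ) (c : Chain σ K) : Prop :=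
  ∀ T, (c T).IsHomogeneous d ∧ (T.card ≠ i → c T = 0)

/-- Koszul homology of `R/I` is nonzero in homological degree `i` and coefficient degree `d`.
Cycles and boundaries are expressed by `R`-valued representatives modulo `I`; the boundary may be
that of an arbitrary, not necessarily homogeneous, chain. -/
def Hne (I : Ideal (MvPolynomial σ K)) (i d : ℕ) : Prop :=
  ∃ c : Chain σ K, Bihom i d c ∧ (∀ T, del c T ∈ I) ∧ ¬ ∃ b : Chain σ K, ∀ T, c T - del b T ∈ I

/-- `I` is a homogeneous ideal. -/
def HomId (I : Ideal (MvPolynomial σ K)) : Prop :=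
  ∀ p ∈ I, ∀ k, homogeneousComponent k p ∈ I

lemma homComp_mul {f : MvPolynomial σ K} {e : ℕ} (hf : f.IsHomogeneous e)
    (r : MvPolynomial σ K) (k : ℕ) :
    homogeneousComponent k (f * r) =
      if e ≤ k then f * homogeneousComponent (k - e) r else 0 := by
  let _ := MvPolynomial.gradedAlgebra (σ := σ) (R := K)
  have hc : ∀ (p : MvPolynomial σ K) (n : ℕ),
      (DirectSum.decompose (homogeneousSubmodule σ K) p n : MvPolynomial σ K)
        = homogeneousComponent n p := fun p n => decomposition.decompose'_apply p n
  split_ifs with h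
  · rw [← hc, ← hc]
    exact DirectSum.coe_decompose_mul_of_left_mem_of_le (homogeneousSubmodule σ K) hf h
  · rw [← hc]
    exact DirectSum.coe_decompose_mul_of_left_mem_of_not_le (homogeneousSubmodule σ K) hf h

lemma int_hom (z : ℤ) : ((z : MvPolynomial σ K)).IsHomogeneous 0 := by
  have : (z : MvPolynomial σ K) = C (z : K) := by simp
  rw [this]; exact isHomogeneous_C _ _

lemma del_bihom {i d : ℕ} {c : Chain σ K} (h : Bihom (i + 1) d c) : Bihom i (d + 1) (del c) := by
  intro T
  refine ⟨?_, fun hT => ?_⟩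
  · refine IsHomogeneous.sum _ _ _ fun a _ => ?_
    have := (int_hom (K := K) (sg a T)).mul ((isHomogeneous_X K a).mul (h (insert a T)).1)
    convert this using 1; ring
  · refine Finset.sum_eq_zero fun a ha => ?_
    rw [(h (insert a T)).2, mul_zero, mul_zero]
    rw [Finset.card_insert_of_notMem (by simpa using ha)]
    omega

lemma del_bihom_zero {d : ℕ} {c : Chain σ K} (h : Bihom 0 d c) (T : Finset σ) : del c T = 0 := by
  refine Finset.sum_eq_zero fun a ha => ?_
  rw [(h (insert a T)).2 (by simp), mul_zero, mul_zero]

/-- The projection of a chain onto homological degree `i` and coefficient degree `d`. -/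
noncomputable def pr (i d : ℕ) (c : Chain σ K) : Chain σ K := fun T =>
  if T.card = i then homogeneousComponent d (c T) else 0

lemma pr_bihom (i d : ℕ) (c : Chain σ K) : Bihom i d (pr i d c) := by
  intro T
  unfold pr
  split_ifs with h
  · exact ⟨homogeneousComponent_isHomogeneous _ _, fun h' => (h' h).elim⟩
  · exact ⟨isHomogeneous_zero _ _ _, fun _ => rfl⟩

lemma del_pr (i d : ℕ) (c : Chain σ K) : del (pr (i + 1) d c) = pr i (d + 1) (del c) := by
  funext T
  have key : ∀ a, homogeneousComponent (d+1) ((sg a T : MvPolynomial σ K) * (X a * c (insert a T)))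
      = (sg a T : MvPolynomial σ K) * (X a * homogeneousComponent d (c (insert a T))) := by
    intro a
    rw [homComp_mul (int_hom _), if_pos (Nat.zero_le _), homComp_mul (isHomogeneous_X K a),
      if_pos (by omega)]
    simp
  by_cases h : T.card = i
  · simp only [pr, del, if_pos h, map_sum, key]
    refine Finset.sum_congr rfl fun a ha => ?_
    rw [if_pos]
    rw [Finset.card_insert_of_notMem (by simpa using ha), h]
  · rw [(del_bihom (pr_bihom (i+1) d c) T).2 h]
    simp [pr, h]

lemma pr_zero_del (i : ℕ) (c : Chain σ K) (T : Finset σ) : pr i 0 (del c) T = 0 := by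
  unfold pr
  split_ifs with h
  · simp only [del, map_sum]
    refine Finset.sum_eq_zero fun a _ => ?_
    rw [homComp_mul (int_hom _), if_pos (Nat.zero_le _), homComp_mul (isHomogeneous_X K a),
      if_neg (by omega), mul_zero]
  · rfl

lemma pr_eq_self {i d : ℕ} {c : Chain σ K} (h : Bihom i d c) : pr i d c = c := by
  funext T
  unfold pr
  split_ifs with h'
  · exact homogeneousComponent_eq_self (h T).1
  · exact ((h T).2 h').symm

lemma pr_mem {I : Ideal (MvPolynomial σ K)} (hI : HomId I) (i d : ℕ) {c : Chain σ K}
    (h : ∀ T, c T ∈ I) (T : Finset σ) : pr i d c T ∈ I := by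
  unfold pr
  split_ifs
  · exact hI _ (h T) _
  · exact I.zero_mem

lemma pr_sub (i d : ℕ) (b c : Chain σ K) : pr i d (b - c) = pr i d b - pr i d c := by
  funext T
  simp only [pr, Pi.sub_apply]
  split_ifs <;> simp

/-- A bihomogeneous chain which is a boundary mod `I` is the boundary mod `I` of a bihomogeneous
chain. In coefficient degree `0` there is no degree left for the latter, so it is `0`. -/
lemma exists_bihom {I : Ideal (MvPolynomial σ K)} (hI : HomId I) {i d : ℕ} {c : Chain σ K}
    (hc : Bihom i d c) (h : ∃ b : Chain σ K, ∀ T, c T - del b T ∈ I) :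
    ∃ b : Chain σ K, (∀ T, c T - del b T ∈ I) ∧
      ((∃ d', d = d' + 1 ∧ Bihom (i + 1) d' b) ∨ b = 0) := by
  obtain ⟨b, hb⟩ := h
  have h1 : ∀ T, c T - pr i d (del b) T ∈ I := by
    intro T
    have := pr_mem hI i d (c := c - del b) hb T
    rwa [pr_sub, pr_eq_self hc] at this
  rcases d with _ | d
  · refine ⟨0, fun T => ?_, Or.inr rfl⟩
    have := h1 T
    rw [pr_zero_del] at this
    simpa [del] using this
  · refine ⟨pr (i + 1) d b, fun T => ?_, Or.inl ⟨d, rfl, pr_bihom _ _ _⟩⟩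
    rw [del_pr]
    exact h1 T


/-! ### The long exact sequence for adding one generator

Throughout, `I = I' + (f)` and `J = I' : f`, so that `0 → R/J → R/I' → R/I → 0` is exact, the first
map being multiplication by `f`. -/

section LES

variable {I I' J : Ideal (MvPolynomial σ K)} {f : MvPolynomial σ K} {e : ℕ}

/-- A bihomogeneous chain with coefficients in `I' + (f)` is, mod `I'`, `f` times a bihomogeneous
chain. -/
lemma exists_rep (hI : ∀ p, p ∈ I ↔ ∃ r, p - f * r ∈ I') (hI' : HomId I')
    (hf : f.IsHomogeneous e) {i d : ℕ} {c : Chain σ K} (hc : Bihom i d c) (h : ∀ T, c T ∈ I) :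
    ∃ r : Chain σ K, (∀ T, c T - f * r T ∈ I') ∧
      ((∃ d', d = d' + e ∧ Bihom i d' r) ∨ r = 0) := by
  choose r hr using fun T => (hI _).1 (h T)
  by_cases hd : e ≤ d
  · refine ⟨pr i (d - e) r, fun T => ?_, Or.inl ⟨d - e, by omega, pr_bihom _ _ _⟩⟩
    have := pr_mem hI' i d (c := c - fun T => f * r T) hr T
    rw [pr_sub, pr_eq_self hc] at this
    convert this using 2
    simp only [Pi.sub_apply, pr, mul_ite, mul_zero, homComp_mul hf, if_pos hd]
  · refine ⟨0, fun T => ?_, Or.inr rfl⟩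
    have := pr_mem hI' i d (c := c - fun T => f * r T) hr T
    rw [pr_sub, pr_eq_self hc] at this
    convert this using 2
    simp [Pi.sub_apply, pr, mul_zero, homComp_mul hf, if_neg hd]

/-- Exactness at `H_i(R/I)`: a class of `H_i(R/I)` with vanishing image under the connecting map to
`H_{i-1}(R/J)` comes from `H_i(R/I')`. -/
lemma les_vanish (hI : ∀ p, p ∈ I ↔ ∃ r, p - f * r ∈ I') (hJ : ∀ p, f * p ∈ I' ↔ p ∈ J)
    (hI' : HomId I') (hJ' : HomId J) (hf : f.IsHomogeneous e) {i d : ℕ} (h : Hne I i d) :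
    Hne I' i d ∨ ∃ i' d', i = i' + 1 ∧ d + 1 = d' + e ∧ Hne J i' d' := by
  obtain ⟨c, hc, hcI, hnb⟩ := h
  have hle : ∀ p ∈ I', p ∈ I := fun p hp => (hI p).2 ⟨0, by simpa using hp⟩
  have hfI : ∀ r, f * r ∈ I := fun r => (hI _).2 ⟨r, by simp⟩
  -- a correction of `c` by a multiple of `f` that is a cycle mod `I'` suffices
  have fin : ∀ s : Chain σ K, Bihom i d (fun T => f * s T) →
      (∀ T, del c T - f * del s T ∈ I') → Hne I' i d := by
    intro s hs hds
    refine ⟨c - fun T => f * s T, fun T => ⟨(hc T).1.sub (hs T).1, fun hT => ?_⟩, fun T => ?_, ?_⟩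
    · simp only [Pi.sub_apply]; rw [(hc T).2 hT, show f * s T = 0 from (hs T).2 hT, sub_zero]
    · rw [del_sub, del_mul]; exact hds T
    · rintro ⟨b, hb⟩
      refine hnb ⟨b, fun T => ?_⟩
      have := I.add_mem (hle _ (hb T)) (hfI (s T))
      simp only [Pi.sub_apply] at this
      convert this using 1; ring
  have fin0 : (∀ T, del c T ∈ I') → Hne I' i d := by
    intro h0
    refine fin 0 (fun T => ⟨by simpa using isHomogeneous_zero _ _ _, by simp⟩) fun T => ?_
    simpa [del] using h0 T
  rcases i with _ | i
  · exact Or.inl (fin0 fun T => by rw [del_bihom_zero hc]; exact I'.zero_mem)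
  obtain ⟨r, hr, hr2⟩ := exists_rep hI hI' hf (del_bihom hc) hcI
  rcases hr2 with ⟨d', hd', hrb⟩ | rfl
  swap
  · exact Or.inl (fin0 fun T => by simpa using hr T)
  by_cases hb : ∃ b : Chain σ K, ∀ T, r T - del b T ∈ J
  · left
    obtain ⟨s, hs, hs2⟩ := exists_bihom hJ' hrb hb
    have hs3 : ∀ T, del c T - f * del s T ∈ I' := fun T => by
      have := I'.add_mem (hr T) ((hJ _).2 (hs T))
      convert this using 1; ring
    rcases hs2 with ⟨d'', rfl, hsb⟩ | rfl
    · refine fin s (fun T => ⟨?_, fun hT => by simp only [(hsb T).2 hT, mul_zero]⟩) hs3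
      convert hf.mul (hsb T).1 using 1; omega
    · exact fin 0 (fun T => ⟨by simpa using isHomogeneous_zero _ _ _, by simp⟩) hs3
  · right
    refine ⟨i, d', rfl, hd', r, hrb, fun T => (hJ _).1 ?_, hb⟩
    have h1 := del_mem I' (c := del c - fun T => f * r T) hr T
    rw [del_sub, del_mul, del_del, zero_sub] at h1
    exact (Submodule.neg_mem_iff _).1 h1

/-- Exactness at `H_i(R/J)`: where `H_i(R/I')` vanishes, the connecting map
`H_{i+1}(R/I) → H_i(R/J)` is onto. -/
lemma les_ne (hI : ∀ p, p ∈ I ↔ ∃ r, p - f * r ∈ I') (hJ : ∀ p, f * p ∈ I' ↔ p ∈ J)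
    (hI' : HomId I') (hf : f.IsHomogeneous e) {i d d' : ℕ}
    (h : Hne J i d') (hd : d + 1 = d' + e) (hv : ¬ Hne I' i (d + 1)) : Hne I (i + 1) d := by
  obtain ⟨r, hr, hrJ, hnb⟩ := h
  have h1 : Bihom i (d + 1) (fun T => f * r T) := fun T =>
    ⟨by convert hf.mul (hr T).1 using 1; omega, fun hT => by simp only [(hr T).2 hT, mul_zero]⟩
  have h2 : ∃ b : Chain σ K, ∀ T, f * r T - del b T ∈ I' := by
    by_contra h3
    exact hv ⟨_, h1, fun T => by rw [del_mul]; exact (hJ _).2 (hrJ T), h3⟩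
  have h3 : ∃ b : Chain σ K, (∀ T, f * r T - del b T ∈ I') ∧ Bihom (i + 1) d b := by
    obtain ⟨b, hb, hb2⟩ := exists_bihom hI' h1 h2
    rcases hb2 with ⟨d'', hd'', hbb⟩ | rfl
    · obtain rfl : d = d'' := by omega
      exact ⟨b, hb, hbb⟩
    · exact ⟨0, hb, fun T => ⟨isHomogeneous_zero _ _ _, fun _ => rfl⟩⟩
  obtain ⟨b, hb, hbb⟩ := h3
  refine ⟨b, hbb, fun T => (hI _).2 ⟨r T, ?_⟩, ?_⟩
  · rw [← Submodule.neg_mem_iff]; convert hb T using 1; ring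
  · rintro ⟨s, hs⟩
    choose t ht using fun T => (hI _).1 (hs T)
    refine hnb ⟨t, fun T => (hJ _).1 ?_⟩
    have h4 := del_mem I' (c := b - del s - fun T => f * t T) ht T
    rw [del_sub, del_sub, del_mul, del_del, sub_zero] at h4
    have := I'.add_mem (hb T) h4
    convert this using 1; ring

end LES

/-! ### Acyclicity of the Koszul complex of the polynomial ring -/

section Base

/-- The quotient of `p` by the variable `a`, discarding the monomials not divisible by `a`. -/
noncomputable def dv (a : σ) (p : MvPolynomial σ K) : MvPolynomial σ K :=
  divMonomial p (Finsupp.single a 1)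

/-- The part of `p` made of the monomials not divisible by the variable `a`. -/
noncomputable def md (a : σ) (p : MvPolynomial σ K) : MvPolynomial σ K :=
  modMonomial p (Finsupp.single a 1)

lemma dv_add (a : σ) (p q : MvPolynomial σ K) : dv a (p + q) = dv a p + dv a q :=
  add_divMonomial _ _ _

lemma dv_zero (a : σ) : dv a (0 : MvPolynomial σ K) = 0 := zero_divMonomial _

lemma dv_sum {ι : Type*} (a : σ) (s : Finset ι) (g : ι → MvPolynomial σ K) :
    dv a (∑ i ∈ s, g i) = ∑ i ∈ s, dv a (g i) :=
  map_sum (⟨⟨dv a, dv_zero a⟩, dv_add a⟩ : MvPolynomial σ K →+ MvPolynomial σ K) g s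

lemma dv_int (a : σ) (z : ℤ) (p : MvPolynomial σ K) :
    dv a ((z : MvPolynomial σ K) * p) = (z : MvPolynomial σ K) * dv a p := by
  rw [← zsmul_eq_mul, ← zsmul_eq_mul]
  exact map_zsmul (⟨⟨dv a, dv_zero a⟩, dv_add a⟩ : MvPolynomial σ K →+ MvPolynomial σ K) z p

lemma dv_X_mul (a : σ) (p : MvPolynomial σ K) : dv a (X a * p) = p :=
  X_mul_divMonomial a p

lemma X_mul_dv_add_md (a : σ) (p : MvPolynomial σ K) : X a * dv a p + md a p = p :=
  divMonomial_add_modMonomial_single p a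

lemma dv_X_mul_ne {a b : σ} (h : b ≠ a) (p : MvPolynomial σ K) :
    dv a (X b * p) = X b * dv a p := by
  ext m
  unfold dv
  rw [coeff_divMonomial, coeff_X_mul', coeff_X_mul']
  have h1 : (b ∈ (Finsupp.single a 1 + m).support) ↔ b ∈ m.support := by
    simp [h.symm]
  simp only [h1]
  split_ifs with h2
  · rw [coeff_divMonomial]
    congr 1
    ext x
    simp only [Finsupp.tsub_apply, Finsupp.add_apply, Finsupp.single_apply]
    by_cases hx : b = x
    · subst hx; simp [h.symm]
    · simp [hx]
  · rfl

lemma coeff_md (a : σ) (p : MvPolynomial σ K) (m : σ →₀ ℕ) :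
    coeff m (md a p) = if m a = 0 then coeff m p else 0 := by
  unfold md
  split_ifs with h
  · exact coeff_modMonomial_of_not_le _ (by rw [Finsupp.single_le_iff]; omega)
  · exact coeff_modMonomial_of_le _ (by rw [Finsupp.single_le_iff]; omega)

/-- The homotopy attached to the variable `a`: wedge with `e_a` and divide the coefficients by
`a`. -/
noncomputable def hom1 (a : σ) (c : Chain σ K) : Chain σ K := fun T =>
  if a ∈ T then (sg a (T.erase a) : MvPolynomial σ K) * dv a (c (T.erase a)) else 0

/-- On cycles, `id - ∂ h_a` is the projection killing every `e_T` with `a ∈ T` and every monomial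
divisible by `a`. -/
lemma homotopy (a : σ) {c : Chain σ K} (hc : ∀ T, del c T = 0) (T : Finset σ) :
    c T - del (hom1 a c) T = if a ∈ T then 0 else md a (c T) := by
  split_ifs with ha
  · obtain ⟨S, hS, rfl⟩ : ∃ S, a ∉ S ∧ T = insert a S :=
      ⟨T.erase a, by simp, (Finset.insert_erase ha).symm⟩
    have h0 := congrArg (dv a) (hc S)
    rw [dv_zero, del, dv_sum, show Sᶜ = insert a (insert a S)ᶜ by
      ext x; by_cases hx : x = a <;> simp [hx, hS], Finset.sum_insert (by simp), dv_int,
      dv_X_mul] at h0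
    have key : del (hom1 a c) (insert a S) = - ((sg a S : MvPolynomial σ K) *
        ∑ x ∈ (insert a S)ᶜ, dv a ((sg x S : MvPolynomial σ K) * (X x * c (insert x S)))) := by
      rw [del, Finset.mul_sum, ← Finset.sum_neg_distrib]
      refine Finset.sum_congr rfl fun x hx => ?_
      simp only [Finset.mem_compl, Finset.mem_insert, not_or] at hx
      have e1 : (insert x (insert a S)).erase a = insert x S := by
        rw [Finset.insert_comm, Finset.erase_insert]
        simp [hS, Ne.symm hx.1]
      have h1 := congrArg (Int.cast : ℤ → MvPolynomial σ K) (sg_swap hS hx.2 (Ne.symm hx.1))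
      have h2 := congrArg (Int.cast : ℤ → MvPolynomial σ K) (sg_mul_self a S)
      have h3 := congrArg (Int.cast : ℤ → MvPolynomial σ K) (sg_mul_self a (insert x S))
      push_cast at h1 h2 h3
      rw [hom1, if_pos (by simp), e1, dv_int, dv_X_mul_ne hx.1]
      linear_combination (X x * dv a (c (insert x S))) *
        ((sg a (insert x S) : MvPolynomial σ K) * sg a S * h1
          - (sg x (insert a S) : MvPolynomial σ K) * (sg a (insert x S)) * h2
          - (sg x S : MvPolynomial σ K) * (sg a S : MvPolynomial σ K) * h3)
    have h2 := congrArg (Int.cast : ℤ → MvPolynomial σ K) (sg_mul_self a S)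
    push_cast at h2
    rw [key]
    linear_combination (sg a S : MvPolynomial σ K) * h0 - c (insert a S) * h2
  · rw [del, Finset.sum_eq_single a]
    · have h2 := congrArg (Int.cast : ℤ → MvPolynomial σ K) (sg_mul_self a T)
      push_cast at h2
      rw [hom1, if_pos (by simp), Finset.erase_insert ha]
      linear_combination -(X_mul_dv_add_md a (c T)) - X a * dv a (c T) * h2
    · intro b _ hb
      rw [hom1, if_neg (by simp [ha, Ne.symm hb]), mul_zero, mul_zero]
    · intro h; simp [ha] at h

/-- Every cycle is homologous to one in which no variable of `A` occurs, neither in the index sets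
nor in the coefficients. -/
lemma reduce (A : Finset σ) {c : Chain σ K} (hc : ∀ T, del c T = 0) :
    ∃ b : Chain σ K, ∀ T, (¬ Disjoint A T → c T - del b T = 0) ∧
      ∀ m, coeff m (c T - del b T) ≠ 0 → ∀ a ∈ A, m a = 0 := by
  induction A using Finset.induction_on with
  | empty => exact ⟨0, fun T => ⟨by simp, by simp⟩⟩
  | insert a A _ ih =>
    obtain ⟨b, hb⟩ := ih
    have hc' : ∀ T, del (c - del b) T = 0 := fun T => by rw [del_sub, hc, del_del, sub_zero]
    refine ⟨b + hom1 a (c - del b), fun T => ?_⟩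
    have h := homotopy a hc' T
    rw [del_add, ← sub_sub]
    simp only [Pi.sub_apply] at h
    rw [h]
    constructor
    · intro hT
      split_ifs with ha
      · rfl
      · rw [Finset.disjoint_insert_left, not_and_or, not_not] at hT
        rw [(hb T).1 (hT.resolve_left ha)]
        ext m; simp [coeff_md]
    · intro m hm x hx
      split_ifs at hm with ha
      · simp at hm
      · rw [coeff_md] at hm
        split_ifs at hm with hma
        · rcases Finset.mem_insert.1 hx with rfl | hx
          · exact hma
          · exact (hb T).2 m hm x hx
        · exact (hm rfl).elim

lemma coeff_zero_del (b : Chain σ K) (T : Finset σ) : coeff 0 (del b T) = 0 := by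
  simp only [← constantCoeff_eq, del, map_sum, map_mul, constantCoeff_X, zero_mul, mul_zero,
    Finset.sum_const_zero]

lemma base_vanish {i d : ℕ} (h : Hne (⊥ : Ideal (MvPolynomial σ K)) i d) : i = 0 ∧ d = 0 := by
  obtain ⟨c, hc, hcI, hnb⟩ := h
  obtain ⟨b, hb⟩ := reduce univ (c := c) (fun T => by simpa using hcI T)
  by_contra hid
  refine hnb ⟨b, fun T => ?_⟩
  rw [Ideal.mem_bot]
  by_cases hT : T = ∅
  swap
  · refine (hb T).1 ?_
    rw [Finset.disjoint_iff_inter_eq_empty, Finset.univ_inter]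
    exact hT
  subst hT
  by_contra hne
  obtain ⟨m, hm⟩ := MvPolynomial.ne_zero_iff.1 hne
  have hm0 : m = 0 := by ext a; exact (hb ∅).2 m hm a (mem_univ _)
  subst hm0
  rw [coeff_sub, coeff_zero_del, sub_zero] at hm
  apply hid
  constructor
  · by_contra hi
    exact hm (by rw [(hc ∅).2 (by simpa using Ne.symm hi)]; simp)
  · have := (hc ∅).1 hm
    simpa using this.symm

lemma base_ne : Hne (⊥ : Ideal (MvPolynomial σ K)) 0 0 := by
  refine ⟨fun T => if T = ∅ then 1 else 0, fun T => ⟨?_, ?_⟩, fun T => ?_, ?_⟩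
  · dsimp only
    split_ifs
    · exact isHomogeneous_one _ _
    · exact isHomogeneous_zero _ _ _
  · intro hT; dsimp only; rw [if_neg]; rintro rfl; simp at hT
  · simp [del]
  · rintro ⟨b, hb⟩
    have := congrArg (coeff 0) ((Ideal.mem_bot).1 (hb ∅))
    rw [coeff_sub, coeff_zero_del] at this
    simp at this

end Base

/-! ### Comparison with the graded Betti numbers -/

section Bridge

variable {I : Ideal (MvPolynomial σ K)}

lemma kd_apply (i : ℕ) (c : KT σ (i + 1) →₀ (MvPolynomial σ K ⧸ I)) (S : KT σ i)
    (c' : Chain σ K) (h : ∀ T : KT σ (i + 1), Ideal.Quotient.mk I (c' T.1) = c T) :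
    kd σ K I (i + 1) c S = Ideal.Quotient.mk I (del c' S.1) := by
  have h1 : kd σ K I (i + 1) c S = ∑ T : KT σ (i + 1), ∑ a ∈ T.1.attach,
      if T.1.erase a.1 = S.1 then
        Ideal.Quotient.mk I ((sg a.1 S.1 : MvPolynomial σ K) * (X a.1 * c' T.1)) else 0 := by
    rw [kd, Finsupp.sum_fintype]
    swap
    · intro T; simp
    rw [Finsupp.finsetSum_apply]
    refine Finset.sum_congr rfl fun T _ => ?_
    rw [Finsupp.finsetSum_apply]
    refine Finset.sum_congr rfl fun a _ => ?_
    rw [Finsupp.smul_apply, Finsupp.single_apply]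
    simp only [Subtype.ext_iff]
    split_ifs with h2
    · have h3 : (T.1.filter (fun b => b < a.1)) = (S.1.filter (fun b => b < a.1)) := by
        rw [← h2]
        ext b
        simp only [Finset.mem_filter, Finset.mem_erase]
        constructor
        · rintro ⟨hb, hlt⟩; exact ⟨⟨hlt.ne, hb⟩, hlt⟩
        · rintro ⟨⟨_, hb⟩, hlt⟩; exact ⟨hb, hlt⟩
      rw [h3, ← h T, map_mul, map_intCast, map_mul, zsmul_eq_mul]
      rfl
    · simp
  rw [h1, del, map_sum]
  have h2 : ∀ T : KT σ (i + 1), (∑ a ∈ T.1.attach,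
      if T.1.erase a.1 = S.1 then
        Ideal.Quotient.mk I ((sg a.1 S.1 : MvPolynomial σ K) * (X a.1 * c' T.1)) else 0)
      = ∑ a ∈ (S.1)ᶜ, if T.1 = insert a S.1 then
        Ideal.Quotient.mk I ((sg a S.1 : MvPolynomial σ K) * (X a * c' T.1)) else 0 := by
    intro T
    rw [Finset.sum_attach T.1 (fun a => if T.1.erase a = S.1 then
        Ideal.Quotient.mk I ((sg a S.1 : MvPolynomial σ K) * (X a * c' T.1)) else 0),
      ← Finset.sum_filter, ← Finset.sum_filter]
    refine Finset.sum_congr ?_ fun _ _ => rfl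
    ext a
    simp only [Finset.mem_filter, Finset.mem_compl]
    constructor
    · rintro ⟨ha, he⟩
      rw [← he]
      exact ⟨by simp, (Finset.insert_erase ha).symm⟩
    · rintro ⟨ha, he⟩
      rw [he]
      exact ⟨by simp, Finset.erase_insert ha⟩
  rw [Finset.sum_congr rfl fun T _ => h2 T, Finset.sum_comm]
  refine Finset.sum_congr rfl fun a ha => ?_
  have hcard : (insert a S.1).card = i + 1 := by
    rw [Finset.card_insert_of_notMem (by simpa using ha), S.2]
  rw [Finset.sum_eq_single (⟨insert a S.1, hcard⟩ : KT σ (i + 1))]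
  · rw [if_pos rfl]
  · intro T _ hT
    rw [if_neg]
    intro h3
    exact hT (Subtype.ext h3)
  · intro h3; exact (h3 (mem_univ _)).elim

lemma exists_lift (i : ℕ) (c : KT σ i →₀ (MvPolynomial σ K ⧸ I)) :
    ∃ c' : Chain σ K, ∀ T : KT σ i, Ideal.Quotient.mk I (c' T.1) = c T := by
  choose p hp using fun T : KT σ i => Ideal.Quotient.mk_surjective (c T)
  refine ⟨fun T => if h : T.card = i then p ⟨T, h⟩ else 0, fun T => ?_⟩
  dsimp only
  rw [dif_pos T.2]
  exact hp T

lemma kd_zero_iff (i : ℕ) (c : KT σ i →₀ (MvPolynomial σ K ⧸ I))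
    (c' : Chain σ K) (h : ∀ T : KT σ i, Ideal.Quotient.mk I (c' T.1) = c T)
    (hc' : ∀ T, T.card ≠ i → c' T = 0) :
    kd σ K I i c = 0 ↔ ∀ T, del c' T ∈ I := by
  rcases i with _ | i
  · constructor
    · intro _ T
      have : del c' T = 0 := Finset.sum_eq_zero fun a ha => by
        rw [hc' _ (by simp), mul_zero, mul_zero]
      rw [this]; exact I.zero_mem
    · intro _
      rw [kd, Finsupp.sum_fintype]
      · refine Finset.sum_eq_zero fun T _ => Finset.sum_eq_zero fun a _ => ?_
        exact (Finset.notMem_empty a.1 (Finset.card_eq_zero.1 T.2 ▸ a.2)).elim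
      · intro T; simp
  · constructor
    · intro hk T
      by_cases hT : T.card = i
      · rw [← Ideal.Quotient.eq_zero_iff_mem, ← kd_apply i c ⟨T, hT⟩ c' h, hk]
        rfl
      · have : del c' T = 0 := Finset.sum_eq_zero fun a ha => by
          rw [hc' _ ?_, mul_zero, mul_zero]
          rw [Finset.card_insert_of_notMem (by simpa using ha)]
          omega
        rw [this]; exact I.zero_mem
    · intro hd
      refine Finsupp.ext fun S => ?_
      refine (kd_apply i c S c' h).trans ?_
      rw [Ideal.Quotient.eq_zero_iff_mem.2 (hd _)]
      rfl

/-- The subtraction `j - i` is truncated on both sides: for `j < i` both speak of chains with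
constant coefficients. -/
lemma bettiNe_iff (i j : ℕ) : BettiNe σ K I i j ↔ Hne I i (j - i) := by
  constructor
  · rintro ⟨c, hh, hk, hb⟩
    choose p hp1 hp2 using hh
    let c' : Chain σ K := fun T => if h : T.card = i then p ⟨T, h⟩ else 0
    have hc' : ∀ T : KT σ i, Ideal.Quotient.mk I (c' T.1) = c T := fun T => by
      simp only [c']
      rw [dif_pos T.2]
      exact hp2 T
    have hbi : Bihom i (j - i) c' := fun T => by
      simp only [c']
      split_ifs with h
      · exact ⟨hp1 _, fun h' => (h' h).elim⟩
      · exact ⟨isHomogeneous_zero _ _ _, fun _ => rfl⟩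
    refine ⟨c', hbi, (kd_zero_iff i c c' hc' fun T => (hbi T).2).1 hk, ?_⟩
    rintro ⟨b, hb'⟩
    refine hb (Finsupp.equivFunOnFinite.symm fun T => Ideal.Quotient.mk I (b T.1)) ?_
    refine Finsupp.ext fun S => ?_
    refine (kd_apply i _ S b fun T => rfl).trans ?_
    rw [← hc', eq_comm, Ideal.Quotient.eq]
    exact hb' S.1
  · rintro ⟨c', hbi, hd, hb⟩
    let c : KT σ i →₀ (MvPolynomial σ K ⧸ I) :=
      Finsupp.equivFunOnFinite.symm fun T => Ideal.Quotient.mk I (c' T.1)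
    have hc' : ∀ T : KT σ i, Ideal.Quotient.mk I (c' T.1) = c T := fun T => rfl
    refine ⟨c, fun T => ⟨c' T.1, (hbi T.1).1, hc' T⟩,
      (kd_zero_iff i c c' hc' fun T => (hbi T).2).2 hd, fun b hbc => ?_⟩
    obtain ⟨b0, hb0⟩ := exists_lift (i + 1) b
    have hz : ∀ T : KT σ i, c' T.1 - del b0 T.1 ∈ I := fun T => by
      rw [← Ideal.Quotient.eq, ← kd_apply i b T b0 hb0]
      exact (hc' T).trans (DFunLike.congr_fun hbc T).symm
    -- outside cardinality `i` the lift has to be cut off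
    let b1 : Chain σ K := fun T => if T.card = i + 1 then b0 T else 0
    refine hb ⟨b1, fun T => ?_⟩
    by_cases hT : T.card = i
    · have : del b1 T = del b0 T := Finset.sum_congr rfl fun a ha => by
        simp only [b1]
        rw [if_pos]
        rw [Finset.card_insert_of_notMem (by simpa using ha), hT]
      rw [this]
      exact hz ⟨T, hT⟩
    · have : del b1 T = 0 := Finset.sum_eq_zero fun a ha => by
        simp only [b1]
        rw [if_neg, mul_zero, mul_zero]
        rw [Finset.card_insert_of_notMem (by simpa using ha)]
        omega
      rw [this, (hbi T).2 hT, sub_zero]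
      exact I.zero_mem

end Bridge

/-! ### Saturated square-free monomial ideals -/

section Monomial

/-- The exponent vector of the square-free monomial with support `S`. -/
noncomputable def ind (S : Finset σ) : σ →₀ ℕ := ∑ a ∈ S, Finsupp.single a 1

lemma ind_apply (S : Finset σ) (a : σ) : ind S a = if a ∈ S then 1 else 0 := by
  simp [ind, Finsupp.finsetSum_apply, Finsupp.single_apply]

lemma ind_le {S : Finset σ} {m : σ →₀ ℕ} : ind S ≤ m ↔ ∀ a ∈ S, m a ≠ 0 := by
  constructor
  · intro h a ha
    have := h a
    rw [ind_apply, if_pos ha] at this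
    omega
  · intro h a
    rw [ind_apply]
    split_ifs with ha
    · exact Nat.one_le_iff_ne_zero.2 (h a ha)
    · exact Nat.zero_le _

lemma sqMon_eq (S : Finset σ) : sqMon σ K S = monomial (ind S) 1 := by
  rw [sqMon, ind, monomial_sum_one]
  rfl

lemma sqMon_hom (S : Finset σ) : (sqMon σ K S).IsHomogeneous S.card := by
  rw [sqMon, Finset.card_eq_sum_ones]
  exact IsHomogeneous.prod _ _ _ fun a _ => isHomogeneous_X _ _

lemma mem_monIdeal {G : Finset (Finset σ)} {p : MvPolynomial σ K} :
    p ∈ monIdeal σ K G ↔ ∀ m, coeff m p ≠ 0 → ∃ S ∈ G, ∀ a ∈ S, m a ≠ 0 := by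
  have : monIdeal σ K G =
      Ideal.span ((fun s => monomial s (1 : K)) '' (ind '' (G : Set (Finset σ)))) := by
    rw [monIdeal, Set.image_image]
    congr 1
    exact Set.image_congr fun S _ => sqMon_eq S
  rw [this, mem_ideal_span_monomial_image]
  simp only [mem_support_iff, Set.exists_mem_image, ind_le, Finset.mem_coe]

lemma homId_monIdeal (G : Finset (Finset σ)) : HomId (monIdeal σ K G) := by
  intro p hp k
  rw [mem_monIdeal] at hp ⊢
  intro m hm
  rw [coeff_homogeneousComponent] at hm
  split_ifs at hm with h
  · exact hp m hm
  · exact (hm rfl).elim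

lemma mem_insert_iff (f : Finset σ) (G : Finset (Finset σ)) (p : MvPolynomial σ K) :
    p ∈ monIdeal σ K (insert f G) ↔ ∃ r, p - sqMon σ K f * r ∈ monIdeal σ K G := by
  rw [monIdeal, Finset.coe_insert, Set.image_insert_eq, Ideal.mem_span_insert]
  constructor
  · rintro ⟨r, z, hz, rfl⟩
    refine ⟨r, ?_⟩
    have h : r * sqMon σ K f + z - sqMon σ K f * r = z := by ring
    exact h.symm ▸ hz
  · rintro ⟨r, hr⟩
    exact ⟨r, _, hr, by ring⟩

/-- The colon ideal of `I(G)` by the monomial of support `f` is generated by the `S \ f`,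
`S ∈ G`. -/
lemma mul_mem_iff (f : Finset σ) (G : Finset (Finset σ)) (p : MvPolynomial σ K) :
    sqMon σ K f * p ∈ monIdeal σ K G ↔ p ∈ monIdeal σ K (G.image (· \ f)) := by
  rw [mem_monIdeal, mem_monIdeal, sqMon_eq]
  constructor
  · intro h m hm
    obtain ⟨S, hS, hS2⟩ := h (ind f + m) (by rwa [coeff_monomial_mul, one_mul])
    refine ⟨S \ f, Finset.mem_image_of_mem _ hS, fun a ha => ?_⟩
    rw [Finset.mem_sdiff] at ha
    have := hS2 a ha.1
    rwa [Finsupp.add_apply, ind_apply, if_neg ha.2, zero_add] at this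
  · intro h m hm
    rw [coeff_monomial_mul'] at hm
    split_ifs at hm with hle
    · rw [one_mul] at hm
      obtain ⟨S', hS', hS2⟩ := h _ hm
      obtain ⟨S, hS, rfl⟩ := Finset.mem_image.1 hS'
      refine ⟨S, hS, fun a ha => ?_⟩
      by_cases haf : a ∈ f
      · exact ind_le.1 hle a haf
      · have := hS2 a (Finset.mem_sdiff.2 ⟨ha, haf⟩)
        rw [Finsupp.tsub_apply] at this
        omega
    · exact (hm rfl).elim

/-- Every generator has a private variable, one dividing no other generator: `H(I)` is
saturated. -/
def Priv (G : Finset (Finset σ)) : Prop := ∀ S ∈ G, ∃ a ∈ S, ∀ T ∈ G, a ∈ T → T = S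

/-- The bigraded support of the Koszul homology of `R/I(G)` for saturated `G` with `n` generators
in `|X|` variables: it lies in `i ≤ n`, `d ≤ |X| - n`, and contains the corner
`(n, |X| - n)`. -/
lemma main (n : ℕ) : ∀ G : Finset (Finset σ), G.card = n → Priv G →
    (∀ i d, Hne (monIdeal σ K G) i d → i ≤ n ∧ d + n ≤ (varsOf σ G).card) ∧
    (∃ d, d + n = (varsOf σ G).card ∧ Hne (monIdeal σ K G) n d) := by
  induction n with
  | zero =>
    intro G hG _
    obtain rfl := Finset.card_eq_zero.1 hG
    have hbot : monIdeal σ K ∅ = ⊥ := by simp [monIdeal]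
    rw [hbot]
    refine ⟨fun i d h => ?_, 0, ?_, base_ne⟩
    · obtain ⟨rfl, rfl⟩ := base_vanish h
      simp
    · simp [varsOf]
  | succ n ih =>
    intro G hG hP
    obtain ⟨f, G', hf, rfl, hG'⟩ := Finset.card_eq_succ.1 hG
    obtain ⟨af, haf, haf2⟩ := hP f (Finset.mem_insert_self _ _)
    have hafG' : ∀ T ∈ G', af ∉ T := fun T hT ha => by
      have := haf2 T (Finset.mem_insert_of_mem hT) ha
      exact hf (this ▸ hT)
    -- the private variables of the other generators avoid `f`, hence survive in the colon ideal
    have hP' : ∀ S ∈ G', ∃ a ∈ S, a ∉ f ∧ ∀ T ∈ G', a ∈ T → T = S := fun S hS => by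
      obtain ⟨a, ha, ha2⟩ := hP S (Finset.mem_insert_of_mem hS)
      refine ⟨a, ha, fun h => ?_, fun T hT => ha2 T (Finset.mem_insert_of_mem hT)⟩
      have := ha2 f (Finset.mem_insert_self _ _) h
      exact hf (this ▸ hS)
    have hinj : Set.InjOn (· \ f) (G' : Set (Finset σ)) := by
      intro S hS T hT h
      obtain ⟨a, ha, haf, ha2⟩ := hP' S hS
      have h2 : a ∈ T \ f := by
        rw [← show S \ f = T \ f from h]
        exact Finset.mem_sdiff.2 ⟨ha, haf⟩
      exact (ha2 T hT (Finset.mem_sdiff.1 h2).1).symm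
    have hcard : (G'.image (· \ f)).card = n := by rw [Finset.card_image_of_injOn hinj, hG']
    have hPJ : Priv (G'.image (· \ f)) := by
      intro S' hS'
      obtain ⟨S, hS, rfl⟩ := Finset.mem_image.1 hS'
      obtain ⟨a, ha, haf, ha2⟩ := hP' S hS
      refine ⟨a, Finset.mem_sdiff.2 ⟨ha, haf⟩, fun T' hT' haT => ?_⟩
      obtain ⟨T, hT, rfl⟩ := Finset.mem_image.1 hT'
      rw [ha2 T hT (Finset.mem_sdiff.1 haT).1]
    have hv1 : (varsOf σ (insert f G')).card = (varsOf σ (G'.image (· \ f))).card + f.card := by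
      have : varsOf σ (insert f G') = varsOf σ (G'.image (· \ f)) ∪ f := by
        ext a
        simp only [varsOf, Finset.mem_biUnion, Finset.mem_insert, id, Finset.mem_union,
          Finset.mem_image, exists_eq_or_imp, exists_exists_and_eq_and, Finset.mem_sdiff]
        by_cases h : a ∈ f <;> simp [h]
      rw [this, Finset.card_union_of_disjoint]
      rw [Finset.disjoint_left]
      intro a ha
      simp only [varsOf, Finset.mem_biUnion, id, Finset.mem_image, exists_exists_and_eq_and,
        Finset.mem_sdiff] at ha
      obtain ⟨_, _, _, h⟩ := ha
      exact h
    have hv2 : (varsOf σ G').card + 1 ≤ (varsOf σ (insert f G')).card := by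
      rw [Nat.add_one_le_iff]
      refine Finset.card_lt_card ((Finset.ssubset_iff_of_subset ?_).2 ⟨af, ?_, ?_⟩)
      · exact Finset.biUnion_subset_biUnion_of_subset_left _ (Finset.subset_insert _ _)
      · exact Finset.mem_biUnion.2 ⟨f, Finset.mem_insert_self _ _, haf⟩
      · intro h
        obtain ⟨T, hT, hT2⟩ := Finset.mem_biUnion.1 h
        exact hafG' T hT hT2
    have hfpos : 1 ≤ f.card := Finset.card_pos.2 ⟨af, haf⟩
    obtain ⟨A1, -⟩ := ih G' hG' fun S hS => by
      obtain ⟨a, ha, -, h⟩ := hP' S hS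
      exact ⟨a, ha, h⟩
    obtain ⟨A2, d', hd', B2⟩ := ih _ hcard hPJ
    constructor
    · intro i d h
      rcases les_vanish (mem_insert_iff f G') (mul_mem_iff f G') (homId_monIdeal _)
        (homId_monIdeal _) (sqMon_hom f) h with h | ⟨i', d', rfl, hdd, h⟩
      · have := A1 _ _ h
        omega
      · have := A2 _ _ h
        omega
    -- the relevant degree of `H_n(R/I')` is too large by one because `f` has a private variable
    · refine ⟨d' + f.card - 1, by omega, ?_⟩
      refine les_ne (mem_insert_iff f G') (mul_mem_iff f G') (homId_monIdeal _)
        (sqMon_hom f) B2 (by omega) fun h => ?_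
      have := A1 _ _ h
      omega

end Monomial

end SatKoszul

/-- Proposition `Psat`, consequences: if the labeled
hypergraph of the square-free monomial ideal `I` (with minimal generators of
supports `G`) is saturated, then `reg(R/I) = |X| - |V|` and `pd(R/I) = |V|`. -/
theorem stmt_3 (σ : Type) [Fintype σ] [LinearOrder σ] (K : Type) [Field K]
    (G : Finset (Finset σ)) (hmin : MinGens σ G) (hne : ∀ S ∈ G, S.Nonempty)
    (hsat : ∀ S ∈ G, Closed σ G S) :
    reg σ K (monIdeal σ K G) = ((varsOf σ G).card : ℤ) - (G.card : ℤ) ∧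
    pdim σ K (monIdeal σ K G) = G.card := by
  have hP : SatKoszul.Priv G := by
    intro S hS
    obtain ⟨a, ha⟩ := hsat S hS
    have h1 : ∀ T, (T ∈ G ∧ a ∈ T) ↔ T = S := fun T => by
      rw [← Finset.mem_singleton, ← ha, EdgeOf, Finset.mem_filter]
    exact ⟨a, ((h1 S).2 rfl).2, fun T hT haT => (h1 T).1 ⟨hT, haT⟩⟩
  obtain ⟨A, d, hd, B⟩ := SatKoszul.main (K := K) G.card G rfl hP
  have hB : BettiNe σ K (monIdeal σ K G) G.card (G.card + d) := by
    rw [SatKoszul.bettiNe_iff _ _, Nat.add_sub_cancel_left]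
    exact B
  have hA : ∀ i j, BettiNe σ K (monIdeal σ K G) i j →
      i ≤ G.card ∧ (j - i) + G.card ≤ (varsOf σ G).card := fun i j h =>
    A _ _ ((SatKoszul.bettiNe_iff _ _).1 h)
  constructor
  · refine IsGreatest.csSup_eq ⟨⟨_, _, hB, ?_⟩, ?_⟩
    · push_cast; omega
    · rintro _ ⟨i, j, h, rfl⟩
      have := hA i j h
      omega
  · refine IsGreatest.csSup_eq ⟨⟨_, hB⟩, ?_⟩
    rintro i ⟨j, h⟩
    exact (hA i j h).1
end

section
/- Let I = (f_1,...,f_μ) be a monomial ideal in R. Then reg(R/I) ≤ max{ deg(lcm(f_{j_1},...,f_{j_i})) − i : 1 ≤ i ≤ μ, 1 ≤ j_1 < ... < j_i ≤ μ }. -/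
/-!
The bound follows from the stronger fact that `β_{ij}(R/I) ≠ 0` forces some `i` of the generators
to have an lcm of degree `j` (`exists_lcm_of_bettiNe`), which is what the Taylor resolution gives.

The Taylor resolution is an iterated mapping cone, and the proof unwinds that construction on Koszul
homology. Let `f` be a further generator. By the long exact sequence of
`0 → R/(I : f)(-deg f) → R/I → R/(I + (f)) → 0`, a nonzero class of bidegree `(i, j)` for `I + (f)`
gives one for `I` in the same bidegree, or one for `I : f` in bidegree `(i - 1, j - deg f)`. Since
`I : f` is generated by the monomials `lcm(g, f) / f` with `g` a generator of `I`, and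
`f * lcm(lcm(g, f) / f : g ∈ F) = lcm(F ∪ {f})` (`sum_sup_insert`), induction on the number of
generators applies (`taylor_vanish`).

For `I = 0` one needs that the Koszul complex of the polynomial ring is exact outside bidegree
`(0, 0)` (`koszul_exact`). For each variable `a`, adding `a` to the index set and dividing by `X a`
is a homotopy from the identity to the projection onto the part without `a` (`kdiff_kcontr`);
composing these projections over all variables leaves only the constants in homological degree `0`.
-/

/-!
Common setup: square-free monomial ideals in `R = K[A]` (here `MvPolynomial σ K`
with `σ` the finite alphabet `A`), encoded by the finite antichain `G` of
supports of their minimal monomial generators; the labeled hypergraph `H(I)`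
of such an ideal, whose vertex set is (in bijection with) `G` and whose edge
labeled by a variable `a` is `E_a = { S ∈ G : a ∈ S }`; and Castelnuovo–Mumford
regularity and projective dimension of `R/I`, defined via graded Betti numbers
`β_{ij}(R/I) = dim_K Tor_i^R(R/I, K)_j`, which are computed from the Koszul
complex of the variables tensored with `R/I`.
-/

open MvPolynomial Finset
open scoped Classical

namespace SqfreeHyp

section Taylor

variable {σ : Type} [LinearOrder σ] {K : Type} [Field K]

/-! ### The Koszul complex over the polynomial ring -/

/-- The sign `(-1) ^ #{b ∈ S : b < a}` attached to removing `a` from `insert a S`; it does not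
depend on whether `a ∈ S`. It is a polynomial, so that it multiplies coefficients directly. -/
noncomputable def ksign (K : Type) [Field K] (a : σ) (S : Finset σ) : MvPolynomial σ K :=
  (-1) ^ (S.filter (fun b => b < a)).card

lemma ksign_mul_self (a : σ) (S : Finset σ) : ksign K a S * ksign K a S = 1 := by
  unfold ksign
  rw [← mul_pow]; simp

lemma ksign_insert_self (a : σ) (S : Finset σ) : ksign K a (insert a S) = ksign K a S := by
  simp [ksign, Finset.filter_insert]

lemma ksign_insert {a b : σ} {S : Finset σ} (hb : b ∉ S) :
    ksign K a (insert b S) = if b < a then - ksign K a S else ksign K a S := by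
  unfold ksign
  rw [Finset.filter_insert]
  split_ifs with h
  · rw [Finset.card_insert_of_notMem (by simp [hb]), pow_succ]; ring
  · rfl

lemma ksign_anticomm {a b : σ} {S : Finset σ} (hab : a ≠ b) (ha : a ∉ S) (hb : b ∉ S) :
    ksign K a S * ksign K b (insert a S) = - (ksign K b S * ksign K a (insert b S)) := by
  rw [ksign_insert ha, ksign_insert hb]
  rcases lt_or_gt_of_ne hab with h | h
  · rw [if_pos h, if_neg h.asymm]; ring
  · rw [if_pos h, if_neg h.asymm]; ring

/-- The part of the Koszul differential that removes the variable `a`. A Koszul chain is a function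
on all subsets of `σ`, its value at `T` being the coefficient of the basis element `e_T`; the chain
need not be homogeneous. -/
noncomputable def kpart (K : Type) [Field K] (a : σ) :
    (Finset σ → MvPolynomial σ K) →ₗ[MvPolynomial σ K] (Finset σ → MvPolynomial σ K) where
  toFun c S := if a ∈ S then 0 else ksign K a S * (X a * c (insert a S))
  map_add' c c' := by
    ext1 S
    simp only [Pi.add_apply]
    split_ifs <;> ring
  map_smul' r c := by
    ext1 S
    simp only [Pi.smul_apply, smul_eq_mul, RingHom.id_apply]
    split_ifs <;> ring

lemma kpart_apply (a : σ) (c : Finset σ → MvPolynomial σ K) (S : Finset σ) :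
    kpart K a c S = if a ∈ S then 0 else ksign K a S * (X a * c (insert a S)) := rfl

lemma kpart_anticomm {a b : σ} (hab : a ≠ b) (c : Finset σ → MvPolynomial σ K) :
    kpart K a (kpart K b c) + kpart K b (kpart K a c) = 0 := by
  ext1 S
  simp only [Pi.add_apply, kpart_apply, Pi.zero_apply, Finset.mem_insert, hab, hab.symm, false_or]
  by_cases ha : a ∈ S
  · simp [ha]
  by_cases hb : b ∈ S
  · simp [hb]
  simp only [ha, hb, if_false, Finset.insert_comm b a S]
  linear_combination (X a * X b * c (insert a (insert b S))) * ksign_anticomm (K := K) hab ha hb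

lemma kpart_self (a : σ) (c : Finset σ → MvPolynomial σ K) : kpart K a (kpart K a c) = 0 := by
  ext1 S
  simp [kpart_apply]

/-- The homotopy in the direction of `a`: it adds `a` to the index set and divides the coefficient
by `X a`, discarding the terms not divisible by `X a`. -/
noncomputable def kcontr (a : σ) (c : Finset σ → MvPolynomial σ K) (S : Finset σ) :
    MvPolynomial σ K :=
  if a ∈ S then ksign K a S * ((c (S.erase a)).divMonomial (Finsupp.single a 1)) else 0

lemma divMonomial_ksign_mul (b : σ) (S : Finset σ) (p : MvPolynomial σ K) (n : σ →₀ ℕ) :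
    (ksign K b S * p).divMonomial n = ksign K b S * p.divMonomial n := by
  unfold ksign
  rcases neg_one_pow_eq_or (MvPolynomial σ K) (S.filter (fun x => x < b)).card with h | h
  · simp [h]
  · rw [h]
    ext
    simp [coeff_divMonomial]

lemma divMonomial_X_mul {a b : σ} (hab : a ≠ b) (p : MvPolynomial σ K) :
    (X b * p).divMonomial (Finsupp.single a 1) = X b * p.divMonomial (Finsupp.single a 1) := by
  ext β
  rw [coeff_divMonomial, coeff_X_mul', coeff_X_mul']
  have : (b ∈ (Finsupp.single a 1 + β).support) ↔ b ∈ β.support := by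
    simp [hab]
  simp only [this]
  split_ifs with h
  · rw [coeff_divMonomial]
    congr 1
    ext x
    simp only [Finsupp.coe_tsub, Finsupp.coe_add, Pi.sub_apply, Pi.add_apply, Finsupp.single_apply]
    rw [Finsupp.mem_support_iff] at h
    split_ifs <;> subst_vars <;> omega
  · rfl

lemma kpart_kcontr_of_ne {a b : σ} (hab : a ≠ b) (c : Finset σ → MvPolynomial σ K) :
    kpart K b (kcontr a c) + kcontr a (kpart K b c) = 0 := by
  ext1 S
  simp only [Pi.add_apply, kpart_apply, Pi.zero_apply, kcontr, Finset.mem_insert, hab, false_or,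
    Finset.mem_erase, hab.symm, ne_eq, not_false_eq_true, true_and]
  by_cases hb : b ∈ S
  · simp [hb, MvPolynomial.divMonomial]
  by_cases ha : a ∈ S
  · obtain ⟨T, haT, rfl⟩ : ∃ T, a ∉ T ∧ S = insert a T :=
      ⟨S.erase a, Finset.notMem_erase a S, (Finset.insert_erase ha).symm⟩
    have hbT : b ∉ T := fun h => hb (Finset.mem_insert_of_mem h)
    simp only [ha, hb, if_true, if_false]
    rw [divMonomial_ksign_mul, divMonomial_X_mul hab, Finset.erase_insert haT,
      Finset.insert_comm b a T, Finset.erase_insert (by simp [haT, hab])]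
    have h1 := ksign_anticomm (K := K) hab haT hbT
    have h2 : ksign K a (insert a (insert b T)) = ksign K a (insert b T) := ksign_insert_self _ _
    have h3 : ksign K a (insert a T) = ksign K a T := ksign_insert_self _ _
    have h4 := ksign_mul_self (K := K) a T
    have h5 := ksign_mul_self (K := K) b T
    have h6 := ksign_mul_self (K := K) a (insert b T)
    have h7 := ksign_mul_self (K := K) b (insert a T)
    rw [h2, h3]
    -- multiply the anticommutation relation by the two signs squaring to one
    have h8 : ksign K b (insert a T) * ksign K a (insert b T) = - (ksign K a T * ksign K b T) := by
      linear_combination (ksign K a T * ksign K a (insert b T)) * h1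
        - ksign K b (insert a T) * ksign K a (insert b T) * h4 - ksign K a T * ksign K b T * h6
    linear_combination (X b * (c (insert b T)).divMonomial (Finsupp.single a 1)) * h8
  · simp [ha, hb]

lemma kpart_kcontr_self (a : σ) (c : Finset σ → MvPolynomial σ K) (S : Finset σ) :
    kpart K a (kcontr a c) S + kcontr a (kpart K a c) S =
      c S - if a ∈ S then 0 else (c S).modMonomial (Finsupp.single a 1) := by
  simp only [kpart_apply, kcontr, Finset.mem_insert, true_or, if_true]
  by_cases ha : a ∈ S
  · simp only [ha, if_true, Finset.notMem_erase, if_false, Finset.insert_erase ha]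
    rw [divMonomial_ksign_mul]
    have h1 : ksign K a S = ksign K a (S.erase a) := by
      conv_lhs => rw [← Finset.insert_erase ha]
      exact ksign_insert_self _ _
    have h2 := ksign_mul_self (K := K) a S
    rw [X_mul_divMonomial, ← h1]
    linear_combination (c S) * h2
  · simp only [ha, if_false, Finset.erase_insert ha, ksign_insert_self]
    have h2 := ksign_mul_self (K := K) a S
    have h3 := divMonomial_add_modMonomial (c S) (Finsupp.single a 1)
    change X a * _ + _ = _ at h3
    linear_combination (X a * (c S).divMonomial (Finsupp.single a 1)) * h2 + h3

lemma kcontr_sum (a : σ) {ι : Type} (s : Finset ι) (c : ι → Finset σ → MvPolynomial σ K) :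
    kcontr a (∑ i ∈ s, c i) = ∑ i ∈ s, kcontr a (c i) := by
  ext1 S
  simp only [kcontr, Finset.sum_apply]
  split_ifs
  · rw [← Finset.mul_sum]
    congr 1
    ext β
    rw [coeff_divMonomial, coeff_sum, coeff_sum]
    exact Finset.sum_congr rfl fun i _ => (coeff_divMonomial ..).symm
  · simp

variable [Fintype σ]

/-- The Koszul differential on chains with polynomial coefficients. -/
noncomputable def kdiff (σ : Type) [LinearOrder σ] [Fintype σ] (K : Type) [Field K] :
    (Finset σ → MvPolynomial σ K) →ₗ[MvPolynomial σ K] (Finset σ → MvPolynomial σ K) :=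
  ∑ a : σ, kpart K a

lemma kdiff_apply (c : Finset σ → MvPolynomial σ K) : kdiff σ K c = ∑ a, kpart K a c := by
  simp [kdiff]

lemma kdiff_kdiff (c : Finset σ → MvPolynomial σ K) : kdiff σ K (kdiff σ K c) = 0 := by
  simp only [kdiff_apply, map_sum]
  rw [← Finset.sum_product']
  refine Finset.sum_involution (fun x _ => (x.2, x.1)) ?_ ?_ ?_ ?_
  · rintro ⟨a, b⟩ -
    by_cases hab : a = b
    · subst hab; simp [kpart_self]
    · exact kpart_anticomm (Ne.symm hab) c
  · rintro ⟨a, b⟩ - h hab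
    obtain rfl : b = a := congrArg Prod.fst hab
    exact h (kpart_self _ _)
  · simp
  · simp

/-- `kcontr a` is a homotopy between the identity and the projection that kills the `e_T` with
`a ∈ T` and sets `X a` to zero in the other coefficients. -/
lemma kdiff_kcontr (a : σ) (c : Finset σ → MvPolynomial σ K) (S : Finset σ) :
    kdiff σ K (kcontr a c) S + kcontr a (kdiff σ K c) S =
      c S - if a ∈ S then 0 else (c S).modMonomial (Finsupp.single a 1) := by
  rw [kdiff_apply, kdiff_apply, kcontr_sum, ← Pi.add_apply, ← Finset.sum_add_distrib,
    Finset.sum_eq_single a, Pi.add_apply, kpart_kcontr_self]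
  · intro b _ hb
    exact kpart_kcontr_of_ne hb.symm c
  · simp

omit [Fintype σ] in
lemma coeff_ksign_mul_ne {a : σ} {S : Finset σ} {p : MvPolynomial σ K} {β : σ →₀ ℕ}
    (h : coeff β (ksign K a S * p) ≠ 0) : coeff β p ≠ 0 := by
  unfold ksign at h
  rcases neg_one_pow_eq_or (MvPolynomial σ K) (S.filter (fun x => x < a)).card with h' | h'
  · simpa [h'] using h
  · simpa [h'] using h

/-- The chain `c` is homogeneous of homological degree `i` and internal degree `j`, the basis
element `e_T` having internal degree `#T`. This avoids the truncated subtraction `j - i`. -/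
def KHom (i j : ℕ) (c : Finset σ → MvPolynomial σ K) : Prop :=
  ∀ T β, coeff β (c T) ≠ 0 → T.card = i ∧ β.degree + T.card = j

lemma exists_of_coeff_kdiff_ne {c : Finset σ → MvPolynomial σ K} {S : Finset σ} {β : σ →₀ ℕ}
    (h : coeff β (kdiff σ K c S) ≠ 0) :
    ∃ a γ, a ∉ S ∧ β = Finsupp.single a 1 + γ ∧ coeff γ (c (insert a S)) ≠ 0 := by
  rw [kdiff_apply, Finset.sum_apply, coeff_sum] at h
  obtain ⟨a, -, ha⟩ := Finset.exists_ne_zero_of_sum_ne_zero h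
  rw [kpart_apply] at ha
  split_ifs at ha with haS
  · simp at ha
  · have h2 := coeff_ksign_mul_ne ha
    rw [coeff_X_mul'] at h2
    split_ifs at h2 with hb
    · refine ⟨a, β - Finsupp.single a 1, haS, (add_tsub_cancel_of_le ?_).symm, h2⟩
      rw [Finsupp.single_le_iff]
      exact Nat.one_le_iff_ne_zero.2 (Finsupp.mem_support_iff.1 hb)
    · exact absurd rfl h2

lemma KHom.kdiff {i j : ℕ} {c : Finset σ → MvPolynomial σ K} (hc : KHom (i + 1) j c) :
    KHom i j (kdiff σ K c) := by
  intro S β h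
  obtain ⟨a, γ, haS, rfl, hγ⟩ := exists_of_coeff_kdiff_ne h
  obtain ⟨h1, h2⟩ := hc _ _ hγ
  rw [Finset.card_insert_of_notMem haS] at h1 h2
  rw [map_add, Finsupp.degree_single]
  omega

lemma KHom.kdiff_eq_zero {j : ℕ} {c : Finset σ → MvPolynomial σ K} (hc : KHom 0 j c) :
    SqfreeHyp.kdiff σ K c = 0 := by
  ext S β
  by_contra h
  obtain ⟨a, γ, haS, rfl, hγ⟩ := exists_of_coeff_kdiff_ne h
  exact Finset.insert_ne_empty a S (Finset.card_eq_zero.1 (hc _ _ hγ).1)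

omit [Fintype σ] in
lemma KHom.kcontr {i j : ℕ} {c : Finset σ → MvPolynomial σ K} (hc : KHom i j c) (a : σ) :
    KHom (i + 1) j (kcontr a c) := by
  intro S β h
  rw [SqfreeHyp.kcontr] at h
  split_ifs at h with haS
  · have h2 := coeff_ksign_mul_ne h
    rw [coeff_divMonomial] at h2
    obtain ⟨h3, h4⟩ := hc _ _ h2
    rw [map_add, Finsupp.degree_single] at h4
    have := Finset.card_erase_add_one haS
    omega
  · simp at h

omit [LinearOrder σ] [Fintype σ] in
lemma KHom.add {i j : ℕ} {c c' : Finset σ → MvPolynomial σ K} (hc : KHom i j c)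
    (hc' : KHom i j c') : KHom i j (c + c') := by
  intro S β h
  rw [Pi.add_apply, coeff_add] at h
  by_cases h1 : coeff β (c S) = 0
  · exact hc' S β (by simpa [h1] using h)
  · exact hc S β h1

omit [LinearOrder σ] [Fintype σ] in
lemma KHom.sub {i j : ℕ} {c c' : Finset σ → MvPolynomial σ K} (hc : KHom i j c)
    (hc' : KHom i j c') : KHom i j (c - c') := by
  rw [sub_eq_add_neg]
  exact hc.add fun S β h => hc' S β (by simpa using h)

/-- A Koszul cycle is homologous to one in which no variable of `A` occurs, neither in the index
sets nor in the coefficients: apply the homotopies of the variables of `A` one after another. -/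
lemma koszul_contract {i j : ℕ} {c : Finset σ → MvPolynomial σ K} (hc : KHom i j c)
    (hd : kdiff σ K c = 0) (A : Finset σ) :
    ∃ b, KHom (i + 1) j b ∧ ∀ T β, coeff β ((c - kdiff σ K b) T) ≠ 0 →
      ∀ a ∈ A, a ∉ T ∧ β a = 0 := by
  induction A using Finset.induction_on with
  | empty => exact ⟨0, fun S β h => by simp at h, by simp⟩
  | insert a A haA ih =>
    obtain ⟨b, hb, hbA⟩ := ih
    set c' := c - kdiff σ K b with hc'
    have hc'h : KHom i j c' := hc.sub hb.kdiff
    have hd' : kdiff σ K c' = 0 := by rw [hc', map_sub, hd, kdiff_kdiff, sub_zero]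
    refine ⟨b + kcontr a c', hb.add (hc'h.kcontr a), fun T β h => ?_⟩
    have h1 := kdiff_kcontr a c' T
    have h0 : kcontr a (0 : Finset σ → MvPolynomial σ K) T = 0 := by
      simp [kcontr]
    rw [hd', h0, add_zero] at h1
    have h2 : (c - kdiff σ K (b + kcontr a c')) T =
        if a ∈ T then 0 else (c' T).modMonomial (Finsupp.single a 1) := by
      rw [map_add, ← sub_sub, ← hc', Pi.sub_apply, h1]; ring
    rw [h2] at h
    split_ifs at h with haT
    · simp at h
    · have hle : ¬ Finsupp.single a 1 ≤ β := fun hle => h (coeff_modMonomial_of_le _ hle)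
      rw [coeff_modMonomial_of_not_le _ hle] at h
      intro x hx
      rcases Finset.mem_insert.1 hx with rfl | hx
      · refine ⟨haT, ?_⟩
        rw [Finsupp.single_le_iff] at hle
        omega
      · exact hbA T β h x hx

/-- The Koszul complex over the polynomial ring is exact in every bidegree except `(0, 0)`. -/
lemma koszul_exact {i j : ℕ} (hij : i ≠ 0 ∨ j ≠ 0) {c : Finset σ → MvPolynomial σ K}
    (hc : KHom i j c) (hd : kdiff σ K c = 0) :
    ∃ b, KHom (i + 1) j b ∧ c = kdiff σ K b := by
  obtain ⟨b, hb, hbA⟩ := koszul_contract hc hd Finset.univ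
  refine ⟨b, hb, ?_⟩
  rw [← sub_eq_zero]
  ext T β
  by_contra h
  obtain ⟨h1, h2⟩ := hc.sub hb.kdiff T β h
  have h3 := hbA T β h
  obtain rfl : T = ∅ := Finset.eq_empty_of_forall_notMem fun a => (h3 a (Finset.mem_univ a)).1
  obtain rfl : β = 0 := Finsupp.ext fun a => (h3 a (Finset.mem_univ a)).2
  simp at h1 h2
  omega

/-! ### Monomial ideals and the induction on the generators -/

/-- The ideal generated by the monomials with exponents `m k`, `k ∈ S`. The family `m` may have
repetitions and redundant members, which passing to a colon ideal produces. -/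
noncomputable def genIdeal (K : Type) [Field K] {ι : Type} (S : Finset ι) (m : ι → σ →₀ ℕ) :
    Ideal (MvPolynomial σ K) :=
  Ideal.span ((fun k => monomial (m k) (1 : K)) '' (S : Set ι))

omit [LinearOrder σ] [Fintype σ] in
lemma mem_genIdeal {ι : Type} {S : Finset ι} {m : ι → σ →₀ ℕ} {p : MvPolynomial σ K} :
    p ∈ genIdeal K S m ↔ ∀ β, coeff β p ≠ 0 → ∃ k ∈ S, m k ≤ β := by
  have h := mem_ideal_span_monomial_image (x := p) (s := m '' (S : Set ι))
  rw [Set.image_image] at h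
  rw [genIdeal, h]
  simp

omit [LinearOrder σ] [Fintype σ] in
/-- An element of `I + (x ^ m k)` is, modulo `I`, the multiple of `x ^ m k` formed by its terms
divisible by `x ^ m k`. -/
lemma sub_mul_divMonomial_mem {ι : Type} {S : Finset ι} {m : ι → σ →₀ ℕ} {k : ι}
    {p : MvPolynomial σ K} (hp : p ∈ genIdeal K (insert k S) m) :
    p - monomial (m k) 1 * p.divMonomial (m k) ∈ genIdeal K S m := by
  have h : p - monomial (m k) 1 * p.divMonomial (m k) = p.modMonomial (m k) := by
    rw [sub_eq_iff_eq_add, add_comm]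
    exact (divMonomial_add_modMonomial p (m k)).symm
  rw [h, mem_genIdeal]
  intro β hβ
  have hle : ¬ m k ≤ β := fun hle => hβ (coeff_modMonomial_of_le _ hle)
  rw [coeff_modMonomial_of_not_le _ hle] at hβ
  obtain ⟨l, hl, hlβ⟩ := mem_genIdeal.1 hp β hβ
  rcases Finset.mem_insert.1 hl with rfl | hl
  · exact absurd hlβ hle
  · exact ⟨l, hl, hlβ⟩

omit [LinearOrder σ] [Fintype σ] in
/-- The colon ideal `I : x ^ n` is generated by the monomials with exponents `m l - n`, where the
subtraction is truncated: this is the exponent of `lcm(x ^ m l, x ^ n) / x ^ n`. -/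
lemma mem_colon {ι : Type} {S : Finset ι} {m : ι → σ →₀ ℕ} {n : σ →₀ ℕ}
    {p : MvPolynomial σ K} :
    p ∈ genIdeal K S (fun l => m l - n) ↔ monomial n 1 * p ∈ genIdeal K S m := by
  simp only [mem_genIdeal]
  constructor
  · intro h β hβ
    rw [coeff_monomial_mul'] at hβ
    split_ifs at hβ with hn
    · obtain ⟨l, hl, hlβ⟩ := h _ (by simpa using hβ)
      refine ⟨l, hl, ?_⟩
      have := tsub_le_iff_right.1 hlβ
      rwa [tsub_add_cancel_of_le hn] at this
    · exact absurd rfl hβ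
  · intro h β hβ
    obtain ⟨l, hl, hlβ⟩ := h (n + β) (by simpa [coeff_monomial_mul] using hβ)
    exact ⟨l, hl, tsub_le_iff_left.2 hlβ⟩

omit [LinearOrder σ] [Fintype σ] in
lemma genIdeal_mono {ι : Type} {S S' : Finset ι} (h : S ⊆ S') (m : ι → σ →₀ ℕ) :
    genIdeal K S m ≤ genIdeal K S' m :=
  Ideal.span_mono (Set.image_mono (by exact_mod_cast h))

omit [LinearOrder σ] in
/-- The degree of the lcm of the monomials indexed by `insert k F` is the degree of `x ^ m k` plus
that of the lcm of the generators of the colon ideal by `x ^ m k` indexed by `F`. -/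
lemma sum_sup_insert {ι : Type} {F : Finset ι} {m : ι → σ →₀ ℕ} {k : ι} :
    ∑ a, ((insert k F).sup fun l => m l a) =
      (m k).degree + ∑ a, F.sup fun l => (m l - m k) a := by
  rw [Finsupp.degree_eq_sum, ← Finset.sum_add_distrib]
  refine Finset.sum_congr rfl fun a _ => ?_
  induction F using Finset.induction_on with
  | empty => simp
  | insert l F hl ih =>
    rw [Finset.insert_comm, Finset.sup_insert, ih, Finset.sup_insert, Finsupp.tsub_apply]
    simp only [max_def]
    split_ifs <;> omega

lemma kdiff_mem {I : Ideal (MvPolynomial σ K)} {c : Finset σ → MvPolynomial σ K}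
    (hc : ∀ T, c T ∈ I) (T : Finset σ) : kdiff σ K c T ∈ I := by
  rw [kdiff_apply, Finset.sum_apply]
  refine Ideal.sum_mem _ fun a _ => ?_
  rw [kpart_apply]
  split_ifs
  · exact I.zero_mem
  · exact I.mul_mem_left _ (I.mul_mem_left _ (hc _))

/-- If no `i` of the generators have an lcm of degree `j`, then every cycle of bidegree `(i, j)` in
the Koszul complex of `R/I` is a boundary. Cycles and boundaries are expressed by polynomial lifts.
The induction step is the long exact sequence of
`0 → R/(I : f)(-deg f) → R/I → R/(I + (f)) → 0` at the level of chains. -/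
theorem taylor_vanish {ι : Type} (S : Finset ι) : ∀ (m : ι → σ →₀ ℕ) (i j : ℕ)
    (_ : ∀ F ⊆ S, F.card = i → (∑ a, F.sup fun k => m k a) ≠ j)
    (c : Finset σ → MvPolynomial σ K) (_ : KHom i j c)
    (_ : ∀ T, kdiff σ K c T ∈ genIdeal K S m),
    ∃ b, KHom (i + 1) j b ∧ ∀ T, (c - kdiff σ K b) T ∈ genIdeal K S m := by
  induction S using Finset.induction_on with
  | empty =>
    intro m i j hF c hc hd
    have hd' : kdiff σ K c = 0 := by
      ext1 T
      simpa [genIdeal] using hd T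
    have hij : i ≠ 0 ∨ j ≠ 0 := by
      by_contra! h
      exact hF ∅ (Finset.Subset.refl _) (by simp [h.1]) (by simp [h.2])
    obtain ⟨b, hb, rfl⟩ := koszul_exact hij hc hd'
    exact ⟨b, hb, fun T => by simp⟩
  | insert k S hk ih =>
    intro m i j hF c hc hd
    set f : MvPolynomial σ K := monomial (m k) 1 with hf
    -- it is enough to correct `c` by a multiple of `f` so that it becomes a cycle modulo `I`
    suffices h : ∃ w : Finset σ → MvPolynomial σ K, KHom i j (f • w) ∧
        ∀ T, kdiff σ K (c - f • w) T ∈ genIdeal K S m by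
      obtain ⟨w, hw, hdw⟩ := h
      obtain ⟨b, hb, hcb⟩ := ih m i j
        (fun F hFS => hF F (hFS.trans (Finset.subset_insert k S))) _ (hc.sub hw) hdw
      refine ⟨b, hb, fun T => ?_⟩
      have h1 := genIdeal_mono (K := K) (Finset.subset_insert k S) m (hcb T)
      have h2 : f * w T ∈ genIdeal K (insert k S) m :=
        Ideal.mul_mem_right _ _ (Ideal.subset_span ⟨k, by simp, rfl⟩)
      have h3 := Ideal.add_mem _ h1 h2
      have h4 : (c - kdiff σ K b) T = (c - f • w - kdiff σ K b) T + f * w T := by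
        simp only [Pi.sub_apply, Pi.smul_apply, smul_eq_mul]; ring
      rwa [h4]
    rcases i with _ | i
    · refine ⟨0, fun T β h => by simp at h, fun T => ?_⟩
      rw [smul_zero, sub_zero, hc.kdiff_eq_zero]
      exact Ideal.zero_mem _
    -- `v` represents the image of the class of `c` under the connecting homomorphism
    set v : Finset σ → MvPolynomial σ K := fun T => (kdiff σ K c T).divMonomial (m k) with hv
    have hsplit : ∀ T, (kdiff σ K c - f • v) T ∈ genIdeal K S m := fun T =>
      sub_mul_divMonomial_mem (hd T)
    have hvdeg : ∀ T β, coeff β (v T) ≠ 0 →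
        T.card = i ∧ (m k).degree + β.degree + T.card = j := by
      intro T β h
      rw [hv, coeff_divMonomial] at h
      have := hc.kdiff _ _ h
      rwa [map_add] at this
    by_cases he : (m k).degree ≤ j
    · have hvh : KHom i (j - (m k).degree) v := fun T β h => by
        have := hvdeg T β h
        omega
      have hdv : ∀ T, kdiff σ K v T ∈ genIdeal K S (fun l => m l - m k) := by
        intro T
        rw [mem_colon]
        have h1 := kdiff_mem hsplit T
        rw [map_sub, kdiff_kdiff, zero_sub, map_smul] at h1
        simpa using h1
      obtain ⟨w, hw, hvw⟩ := ih (fun l => m l - m k) i (j - (m k).degree) (by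
        intro F hFS hFi hFj
        refine hF (insert k F) (Finset.insert_subset_insert k hFS) ?_ ?_
        · rw [Finset.card_insert_of_notMem fun h => hk (hFS h), hFi]
        · rw [sum_sup_insert, hFj]; omega) v hvh hdv
      refine ⟨w, fun T β h => ?_, fun T => ?_⟩
      · rw [Pi.smul_apply, smul_eq_mul, hf, coeff_monomial_mul'] at h
        split_ifs at h with hle
        · obtain ⟨h1, h2⟩ := hw T (β - m k) (by simpa using h)
          have h3 : (β - m k).degree + (m k).degree = β.degree := by
            rw [← map_add, tsub_add_cancel_of_le hle]
          omega
        · exact absurd rfl h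
      · have h1 := Ideal.add_mem _ (hsplit T) (mem_colon.1 (hvw T))
        have h2 : kdiff σ K (c - f • w) T = (kdiff σ K c - f • v) T +
            monomial (m k) 1 * (v - kdiff σ K w) T := by
          rw [map_sub, map_smul]
          simp only [Pi.sub_apply, Pi.smul_apply, smul_eq_mul, hf]; ring
        rwa [h2]
    -- here the degree `j - deg f` of `v` would be negative
    · have hv0 : v = 0 := by
        ext T β
        by_contra h
        have := hvdeg T β h
        omega
      refine ⟨0, fun T β h => by simp at h, fun T => ?_⟩
      simpa [hv0] using hsplit T

/-! ### Comparison with the Koszul complex of `R/I` -/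

lemma kd_apply {I : Ideal (MvPolynomial σ K)} {i : ℕ} (hi : 1 ≤ i)
    {c : KT σ i →₀ (MvPolynomial σ K ⧸ I)} {p : Finset σ → MvPolynomial σ K}
    (h : ∀ T : KT σ i, c T = Ideal.Quotient.mk I (p T.1)) (S : KT σ (i - 1)) :
    kd σ K I i c S = Ideal.Quotient.mk I (kdiff σ K p S.1) := by
  have h1 : kd σ K I i c S = ∑ T : KT σ i, ∑ a : σ, if a ∈ T.1 ∧ T.1.erase a = S.1 then
      Ideal.Quotient.mk I (ksign K a T.1 * (X a * p T.1)) else 0 := by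
    rw [kd, Finsupp.sum_fintype _ _ (fun T => by simp), Finsupp.finsetSum_apply]
    refine Finset.sum_congr rfl fun T _ => ?_
    rw [Finsupp.finsetSum_apply, ← Finset.sum_subset (Finset.subset_univ T.1)
      (fun a _ ha => by simp [ha]), ← Finset.sum_attach T.1]
    refine Finset.sum_congr rfl fun a _ => ?_
    rw [Finsupp.smul_apply, Finsupp.single_apply]
    simp only [a.2, true_and, Subtype.ext_iff]
    split_ifs
    · rw [h, zsmul_eq_mul, ksign]
      change _ * Ideal.Quotient.mk I (X a.1 * p T.1) = _
      simp
    · simp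
  rw [h1, Finset.sum_comm, kdiff_apply, Finset.sum_apply, map_sum]
  refine Finset.sum_congr rfl fun a _ => ?_
  rw [kpart_apply]
  by_cases ha : a ∈ S.1
  · rw [if_pos ha, map_zero]
    refine Finset.sum_eq_zero fun T _ => if_neg ?_
    rintro ⟨-, h2⟩
    rw [← h2] at ha
    exact Finset.notMem_erase a _ ha
  · have hcard : (insert a S.1).card = i := by
      rw [Finset.card_insert_of_notMem ha, S.2]; omega
    rw [if_neg ha, Finset.sum_eq_single (⟨insert a S.1, hcard⟩ : KT σ i)]
    · simp [Finset.erase_insert ha, ksign_insert_self]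
    · rintro T - hT
      refine if_neg ?_
      rintro ⟨h2, h3⟩
      exact hT (Subtype.ext ((Finset.insert_erase h2).symm.trans (by rw [h3])))
    · simp

/-- If `β_{ij}(R/I) ≠ 0`, then some `i` of the generators have an lcm of degree `j`. The hypothesis
`i ≤ j` is needed because of the truncated subtraction in `IsHomogEl`: a constant cycle of
homological degree `i` counts as homogeneous of every internal degree `j ≤ i`. -/
theorem exists_lcm_of_bettiNe {ι : Type} (S : Finset ι) (m : ι → σ →₀ ℕ) {i j : ℕ} (hij : i ≤ j)
    (h : BettiNe σ K (genIdeal K S m) i j) :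
    ∃ F ⊆ S, F.card = i ∧ (∑ a, F.sup fun k => m k a) = j := by
  by_contra! hF
  obtain ⟨c, hc, hcyc, hbd⟩ := h
  choose p hp hpc using hc
  set q : Finset σ → MvPolynomial σ K := fun T => if hT : T.card = i then p ⟨T, hT⟩ else 0 with hq
  have hcq : ∀ T : KT σ i, c T = Ideal.Quotient.mk (genIdeal K S m) (q T.1) := by
    intro T
    rw [← hpc, hq]
    simp [T.2]
  have hqh : KHom i j q := by
    intro T β hβ
    simp only [hq] at hβ
    split_ifs at hβ with hT
    · have h1 := hp ⟨T, hT⟩ hβ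
      have h2 : β.degree = Finsupp.weight 1 β := by
        rw [Finsupp.degree_eq_weight_one]; rfl
      omega
    · simp at hβ
  have hdq : ∀ T, kdiff σ K q T ∈ genIdeal K S m := by
    intro T
    rcases i with _ | i
    · rw [hqh.kdiff_eq_zero]
      exact Ideal.zero_mem _
    · by_cases hT : T.card = i
      · rw [← Ideal.Quotient.eq_zero_iff_mem,
          ← kd_apply (i := i + 1) (by omega) hcq ⟨T, hT⟩, hcyc]
        rfl
      · have h0 : kdiff σ K q T = 0 := by
          ext β
          by_contra hβ
          exact hT (hqh.kdiff T β hβ).1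
        rw [h0]
        exact Ideal.zero_mem _
  obtain ⟨b, -, hbq⟩ := taylor_vanish S m i j hF q hqh hdq
  refine hbd (Finsupp.equivFunOnFinite.symm fun T => Ideal.Quotient.mk _ (b T.1)) ?_
  ext1 T
  have h1 := kd_apply (i := i + 1) (I := genIdeal K S m) (by omega)
    (c := Finsupp.equivFunOnFinite.symm fun T => Ideal.Quotient.mk _ (b T.1)) (p := b)
    (fun T => by simp) T
  refine h1.trans ?_
  rw [hcq T, eq_comm, Ideal.Quotient.eq]
  exact hbq T.1

end Taylor
end SqfreeHyp

open SqfreeHyp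

/-- for a monomial ideal `I = (f_1,…,f_μ)` (the monomials
encoded by their exponent vectors `D`, `f = x^m` for `m ∈ D`),
`reg(R/I) ≤ max { deg lcm(f_{j_1},…,f_{j_i}) − i : ∅ ≠ F ⊆ D }`, where for a
subset `F` of the generators `lcm` has exponent `sup_{m ∈ F} m`.  (Stated as:
any upper bound `B` of the right-hand maximum bounds `reg(R/I)`.) -/
theorem stmt_7 (σ : Type) [Fintype σ] [LinearOrder σ] (K : Type) [Field K]
    (D : Finset (σ →₀ ℕ)) (hD : D.Nonempty) (h0 : ∀ m ∈ D, m ≠ 0)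
    (B : ℤ)
    (hB : ∀ F ∈ D.powerset, F.Nonempty →
      (∑ a : σ, ((F.sup fun m => m a : ℕ) : ℤ)) - (F.card : ℤ) ≤ B) :
    reg σ K (Ideal.span ((fun m => (MvPolynomial.monomial m (1 : K))) '' (D : Set (σ →₀ ℕ)))) ≤ B := by
  have hB0 : 0 ≤ B := by
    obtain ⟨m, hm⟩ := hD
    have h1 := hB {m} (by simpa using hm) (Finset.singleton_nonempty m)
    have h2 : m.degree ≠ 0 := fun h => h0 m hm ((Finsupp.degree_eq_zero_iff m).1 h)
    rw [Finsupp.degree_eq_sum] at h2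
    simp only [Finset.sup_singleton, Finset.card_singleton] at h1
    have h3 : (1 : ℤ) ≤ ∑ a, (m a : ℤ) := by exact_mod_cast Nat.one_le_iff_ne_zero.2 h2
    push_cast at h1
    linarith
  rw [reg]
  -- the supremum of the empty set of integers is `0`, which is also at most `B`
  rcases Set.eq_empty_or_nonempty
    { d : ℤ | ∃ i j : ℕ, BettiNe σ K (Ideal.span ((fun m => (MvPolynomial.monomial m (1 : K))) ''
      (D : Set (σ →₀ ℕ)))) i j ∧ d = (j : ℤ) - (i : ℤ) } with he | hne
  · rw [he, Int.csSup_empty]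
    exact hB0
  refine csSup_le hne ?_
  rintro d ⟨i, j, hb, rfl⟩
  rcases lt_or_ge j i with hji | hij
  · omega
  obtain ⟨F, hF, hFi, hFj⟩ := exists_lcm_of_bettiNe D id hij hb
  rcases F.eq_empty_or_nonempty with rfl | hFne
  · simp at hFi hFj
    omega
  · have h1 := hB F (Finset.mem_powerset.2 hF) hFne
    rw [hFi] at h1
    have h2 : (∑ a : σ, ((F.sup fun m => m a : ℕ) : ℤ)) = (j : ℤ) := by
      rw [← hFj]; push_cast; rfl
    linarith
end

section
/- Let I ⊆ R = K[A] be a square-free monomial ideal whose labeled hypergraph H(I) = (V, X, E, 𝓔) has only isolated open vertices (i.e., every neighbor of every open vertex is closed). Then reg(R/I) ≤ |X| − |V|, where |X| is the number of variables appearing in the minimal generators and |V| is the number of minimal generators. -/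
/-!
The Koszul complex over `R/I` splits into strands of multidegree `m`. A strand has as basis the
sets `T` contained in the support `U` of `m` such that `x^(m - 1_T)` is not in `I`. It suffices to
show that a strand with homology in degree `i` satisfies `|m| - i ≤ |X| - |V|`.

* If a variable `a` in `U` has exponent at least `2`, or lies in no generator dividing `x^m`, then
  adding and removing `a` contracts the strand (`exactAt_cone`). So in a strand with homology `m` is
  square-free and `U` is the union of the family `G_U` of generators contained in `U`
  (`strand_not_exact`). The strand is then the complex of transversals of `G_U` in `U`.
* Let `C` be the subfamily of members of `G_U` having a variable contained in no other member.
  Peeling off one member of `C` at a time by a long exact sequence (`exactAt_quot`) shows that the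
  complex of transversals is exact below degree `|C|`, and exact everywhere if `C` covers `U` and is
  not all of `G_U` (`exactAt_trans`). As open vertices are isolated, every variable of a member of
  `G_U` outside `C` also lies in a member of `C`, so `C` does cover `U`. Hence homology in degree `i`
  forces `C = G_U` and `i ≥ |G_U|`.
* Each generator not contained in `U` owns a variable outside `U`: a private one if it is closed,
  and any variable outside `U` if it is open. Isolation of the open vertices makes these distinct
  (`card_restrict`), so `|V| - |G_U| ≤ |X| - |U|`, and therefore
  `|m| - i ≤ |U| - |G_U| ≤ |X| - |V|`.

The passage between `R/I`-valued Koszul chains and their strands is `boundary_of_strands`.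
-/

/-!
Common setup: square-free monomial ideals in `R = K[A]` (here `MvPolynomial σ K`
with `σ` the finite alphabet `A`), encoded by the finite antichain `G` of
supports of their minimal monomial generators; the labeled hypergraph `H(I)`
of such an ideal, whose vertex set is (in bijection with) `G` and whose edge
labeled by a variable `a` is `E_a = { S ∈ G : a ∈ S }`; and Castelnuovo–Mumford
regularity and projective dimension of `R/I`, defined via graded Betti numbers
`β_{ij}(R/I) = dim_K Tor_i^R(R/I, K)_j`, which are computed from the Koszul
complex of the variables tensored with `R/I`.
-/

open MvPolynomial Finset
open scoped Classical

open SqfreeHyp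

namespace SqfreeHyp

set_option linter.unusedSectionVars false

/-! ### Complexes of transversals -/

section Combinatorics

variable {σ : Type} [Fintype σ] [LinearOrder σ]

/-- The Koszul sign of the pair `a, T`: the parity of the number of elements of `T` below `a`. It
is the same for `T` and `insert a T`. -/
def sg (a : σ) (T : Finset σ) : ℤ := (-1) ^ (T.filter (fun b => b < a)).card

/-- The simplicial (Koszul) differential on functions of subsets of `σ`, written as a formula for
the value at `T`; all sizes of subsets are treated at once. -/
def bd {A : Type*} [AddCommGroup A] (f : Finset σ → A) (T : Finset σ) : A :=
  ∑ a ∈ Tᶜ, sg a T • f (insert a T)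

lemma sg_mul_self (a : σ) (T : Finset σ) : sg a T * sg a T = 1 := by
  unfold sg
  rw [← mul_pow]; simp

lemma sg_insert {a b : σ} {T : Finset σ} (hb : b ∉ T) :
    sg a (insert b T) = if b < a then - sg a T else sg a T := by
  unfold sg
  rw [Finset.filter_insert]
  split_ifs with h
  · rw [Finset.card_insert_of_notMem (by simp [hb]), pow_succ]; ring
  · rfl

lemma sg_swap {a b : σ} {T : Finset σ} (hab : a ≠ b) (ha : a ∉ T) (hb : b ∉ T) :
    sg a T * sg b (insert a T) = - (sg b T * sg a (insert b T)) := by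
  rw [sg_insert ha, sg_insert hb]
  rcases lt_or_gt_of_ne hab with h | h
  · simp [h, not_lt.mpr h.le, mul_comm]
  · simp [h, not_lt.mpr h.le, mul_comm]

lemma bd_bd {A : Type*} [AddCommGroup A] (f : Finset σ → A) (T : Finset σ) :
    bd (bd f) T = 0 := by
  unfold bd
  simp only [Finset.smul_sum, smul_smul]
  rw [Finset.sum_sigma']
  refine Finset.sum_involution (fun x _ => ⟨x.2, x.1⟩) ?_ ?_ ?_ ?_
  · rintro ⟨a, b⟩ h
    simp only [mem_sigma, mem_compl, mem_insert, not_or] at h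
    rw [Finset.insert_comm a b T, ← add_smul, sg_swap (Ne.symm h.2.1) h.1 h.2.2]
    simp
  · rintro ⟨a, b⟩ h _ heq
    simp only [mem_sigma, mem_compl, mem_insert, not_or] at h
    simp only [Sigma.mk.injEq] at heq
    exact h.2.1 heq.1
  · rintro ⟨a, b⟩ h
    simp only [mem_sigma, mem_compl, mem_insert, not_or] at h ⊢
    exact ⟨h.2.2, Ne.symm h.2.1, h.1⟩
  · rintro ⟨a, b⟩ h
    rfl

lemma bd_sub {A : Type*} [AddCommGroup A] (f g : Finset σ → A) (T : Finset σ) :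
    bd (fun S => f S - g S) T = bd f T - bd g T := by
  simp [bd, smul_sub, Finset.sum_sub_distrib]

/-- Exactness in homological degree `i` of the subquotient of the simplicial chain complex on `σ`
(coefficients in `A`) which is spanned by the subsets satisfying `P`: chains are functions
supported on `P`, and the differential only retains the components in `P`. -/
def ExactAt (A : Type*) [AddCommGroup A] (P : Finset σ → Prop) (i : ℕ) : Prop :=
  ∀ f : Finset σ → A, (∀ T, f T ≠ 0 → P T ∧ T.card = i) → (∀ T, P T → bd f T = 0) →
    ∃ g : Finset σ → A, (∀ T, g T ≠ 0 → P T ∧ T.card = i + 1) ∧ ∀ T, P T → bd g T = f T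

/-- If `P` does not see the element `a`, adding and deleting `a` contracts the complex. -/
lemma exactAt_cone {A : Type*} [AddCommGroup A] {P : Finset σ → Prop} (a : σ)
    (hP : ∀ T, a ∉ T → (P T ↔ P (insert a T))) (i : ℕ) : ExactAt A P i := by
  intro f hf hcyc
  -- the contracting homotopy adds `a` to every set not containing it
  refine ⟨fun T => if a ∈ T then sg a T • f (T.erase a) else 0, ?_, ?_⟩
  · intro T hT
    beta_reduce at hT
    by_cases ha : a ∈ T
    · rw [if_pos ha] at hT
      have h1 : f (T.erase a) ≠ 0 := fun h => hT (by rw [h, smul_zero])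
      obtain ⟨h2, h3⟩ := hf _ h1
      rw [hP _ (Finset.notMem_erase a T), Finset.insert_erase ha] at h2
      refine ⟨h2, ?_⟩
      rw [← h3, Finset.card_erase_add_one ha]
    · simp [ha] at hT
  · intro T hT
    by_cases ha : a ∈ T
    · obtain ⟨T0, ha0, rfl⟩ : ∃ T0, a ∉ T0 ∧ insert a T0 = T :=
        ⟨T.erase a, Finset.notMem_erase a T, Finset.insert_erase ha⟩
      have h0 := hcyc T0 ((hP T0 ha0).mpr hT)
      have hc : T0ᶜ = insert a (insert a T0)ᶜ := by
        ext x; simp only [mem_compl, mem_insert]; by_cases hx : x = a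
        · subst hx; simp [ha0]
        · simp [hx]
      unfold bd at h0 ⊢
      beta_reduce
      rw [hc, Finset.sum_insert (by simp)] at h0
      have h1 : f (insert a T0)
          = - (sg a T0 • ∑ b ∈ (insert a T0)ᶜ, sg b T0 • f (insert b T0)) := by
        rw [← eq_neg_iff_add_eq_zero] at h0
        rw [← smul_neg, ← h0, smul_smul, sg_mul_self, one_smul]
      rw [h1, Finset.smul_sum, ← Finset.sum_neg_distrib]
      refine Finset.sum_congr rfl fun b hb => ?_
      simp only [mem_compl, mem_insert, not_or] at hb
      have e : (insert b (insert a T0)).erase a = insert b T0 := by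
        rw [Finset.insert_comm, Finset.erase_insert]
        simp [ha0, Ne.symm hb.1]
      rw [if_pos (by simp), e, smul_smul, smul_smul, ← neg_smul]
      congr 1
      have h2 := sg_swap (T := T0) (Ne.symm hb.1) ha0 hb.2
      have e2 : sg a (insert b (insert a T0)) = sg a (insert b T0) := by
        rw [Finset.insert_comm, sg_insert (b := a)]
        · simp
        · simp [ha0, Ne.symm hb.1]
      rw [e2]
      have h3 := sg_mul_self a T0
      have h4 := sg_mul_self a (insert b T0)
      linear_combination (sg a T0 * sg a (insert b T0)) * h2 -
        (sg b (insert a T0) * sg a (insert b T0)) * h3 - sg a T0 * sg b T0 * h4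
    · unfold bd
      beta_reduce
      rw [Finset.sum_eq_single a]
      · rw [if_pos (by simp), Finset.erase_insert ha, smul_smul, sg_insert ha]
        simp [sg_mul_self]
      · intro b _ hb
        rw [if_neg (by simp [ha, Ne.symm hb]), smul_zero]
      · intro h; simp [ha] at h

/-- The long exact sequence argument: the complex of sets of `P` meeting `c` is the quotient of
the complex of `P` by the subcomplex of sets of `P` disjoint from `c`. -/
lemma exactAt_quot {A : Type*} [AddCommGroup A] {P : Finset σ → Prop} (c : Finset σ)
    (hconv : ∀ T S R, T ⊆ S → S ⊆ R → P T → P R → P S) (i : ℕ)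
    (h1 : ExactAt A P (i + 1)) (h2 : ExactAt A (fun T => P T ∧ Disjoint T c) i) :
    ExactAt A (fun T => P T ∧ ¬ Disjoint T c) (i + 1) := by
  intro f hf hcyc
  have hmono : ∀ {T : Finset σ} (a : σ), ¬ Disjoint T c → ¬ Disjoint (insert a T) c :=
    fun a hT h => hT (h.mono_left (Finset.subset_insert _ _))
  -- the connecting homomorphism: the boundary of `f` in `P` is a cycle of the subcomplex
  obtain ⟨w, hw, hw'⟩ : ∃ w : Finset σ → A,
      (∀ T, w T ≠ 0 → (P T ∧ Disjoint T c) ∧ T.card = i + 1) ∧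
      ∀ T, P T ∧ Disjoint T c → bd w T = if P T ∧ Disjoint T c then bd f T else 0 := by
    apply h2 (fun T => if P T ∧ Disjoint T c then bd f T else 0)
    · intro T hT
      by_cases h : P T ∧ Disjoint T c
      · refine ⟨h, ?_⟩
        rw [if_pos h] at hT
        obtain ⟨a, ha, hne⟩ := Finset.exists_ne_zero_of_sum_ne_zero hT
        have h3 : f (insert a T) ≠ 0 := fun h => hne (by rw [h, smul_zero])
        have h4 := (hf _ h3).2
        rw [Finset.card_insert_of_notMem (by simpa using ha)] at h4
        omega
      · rw [if_neg h] at hT; exact absurd rfl hT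
    · intro T hT
      refine Eq.trans ?_ (bd_bd f T)
      change ∑ a ∈ Tᶜ, _ = ∑ a ∈ Tᶜ, _
      refine Finset.sum_congr rfl fun a _ => ?_
      congr 1
      beta_reduce
      split_ifs with h
      · rfl
      · symm
        by_cases hPa : P (insert a T)
        · exact hcyc _ ⟨hPa, fun hd => h ⟨hPa, hd⟩⟩
        · -- by convexity no superset of `insert a T` lies in `P`
          refine Finset.sum_eq_zero fun b _ => ?_
          have : f (insert b (insert a T)) = 0 := by
            by_contra h3
            exact hPa (hconv T _ _ (Finset.subset_insert _ _) (Finset.subset_insert _ _) hT.1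
              (hf _ h3).1.1)
          rw [this, smul_zero]
  -- hence `f - w` is a cycle of `P`
  obtain ⟨g, hg, hg'⟩ : ∃ g : Finset σ → A, (∀ T, g T ≠ 0 → P T ∧ T.card = i + 1 + 1) ∧
      ∀ T, P T → bd g T = f T - w T := by
    apply h1 (fun T => f T - w T)
    · intro T hT
      by_cases h : f T = 0
      · have : w T ≠ 0 := by
          intro h'; apply hT; simp [h, h']
        exact ⟨(hw T this).1.1, (hw T this).2⟩
      · exact ⟨(hf T h).1.1, (hf T h).2⟩
    · intro T hT
      rw [bd_sub]
      by_cases hd : Disjoint T c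
      · rw [hw' T ⟨hT, hd⟩, if_pos ⟨hT, hd⟩, sub_self]
      · rw [hcyc T ⟨hT, hd⟩, zero_sub, neg_eq_zero]
        unfold bd
        refine Finset.sum_eq_zero fun a _ => ?_
        have : w (insert a T) = 0 := by
          by_contra h; exact hmono a hd (hw _ h).1.2
        rw [this, smul_zero]
  refine ⟨fun T => if P T ∧ ¬ Disjoint T c then g T else 0, ?_, ?_⟩
  · intro T hT
    beta_reduce at hT
    by_cases h : P T ∧ ¬ Disjoint T c
    · rw [if_pos h] at hT
      exact ⟨h, (hg T hT).2⟩
    · rw [if_neg h] at hT; exact absurd rfl hT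
  · intro T hT
    have hwT : w T = 0 := by
      by_contra h; exact hT.2 (hw T h).1.2
    have := hg' T hT.1
    rw [hwT, sub_zero] at this
    rw [← this]
    unfold bd
    refine Finset.sum_congr rfl fun a _ => ?_
    congr 1
    beta_reduce
    by_cases hga : g (insert a T) = 0
    · simp [hga]
    · rw [if_pos ⟨(hg _ hga).1, hmono a hT.2⟩]

/-- `T` is a transversal of the family `G`, contained in `U`. -/
def Trans (G : Finset (Finset σ)) (U T : Finset σ) : Prop :=
  T ⊆ U ∧ ∀ S ∈ G, ¬ Disjoint T S

/-- Exactness of the complex of transversals, given a subfamily `C` of members with private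
elements: exact below degree `|C|`, and exact in all degrees when `C` is a proper subfamily which
covers `U`. A member `c` of `C` is peeled off: without `c`, its private element is invisible, so
the corresponding complex is contractible, while the transversals disjoint from `c` are those of
the remaining family in `U \ c`. -/
lemma exactAt_trans {A : Type*} [AddCommGroup A] (C : Finset (Finset σ)) :
    ∀ (G : Finset (Finset σ)) (U : Finset σ) (i : ℕ), C ⊆ G →
      (∀ S ∈ C, ∃ p ∈ S, p ∈ U ∧ ∀ S' ∈ G, p ∈ S' → S' = S) →
      (i < C.card ∨ (C ≠ G ∧ ∀ a ∈ U, ∃ S ∈ C, a ∈ S)) → ExactAt A (Trans G U) i := by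
  induction C using Finset.induction_on with
  | empty =>
    intro G U i _ _ h f hf _
    rcases h with h | ⟨h1, h2⟩
    · simp at h
    · obtain ⟨S, hS⟩ := Finset.nonempty_iff_ne_empty.mpr (Ne.symm h1)
      have hno : ∀ T, ¬ Trans G U T := by
        rintro T ⟨hT, hT'⟩
        refine hT' S hS ?_
        have : T = ∅ := by
          rw [Finset.eq_empty_iff_forall_notMem]
          intro a ha
          simpa using h2 a (hT ha)
        simp [this]
      exact ⟨0, fun T hT => absurd rfl hT, fun T hT => absurd hT (hno T)⟩
  | insert c C hc ih =>
    intro G U i hCG hpriv h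
    have hcG : c ∈ G := hCG (Finset.mem_insert_self _ _)
    have hsplit : Trans G U = fun T => Trans (G.erase c) U T ∧ ¬ Disjoint T c := by
      funext T
      apply propext
      constructor
      · rintro ⟨h1, h2⟩
        exact ⟨⟨h1, fun S hS => h2 S (Finset.mem_of_mem_erase hS)⟩, h2 c hcG⟩
      · rintro ⟨⟨h1, h2⟩, h3⟩
        refine ⟨h1, fun S hS => ?_⟩
        by_cases hSc : S = c
        · rwa [hSc]
        · exact h2 S (Finset.mem_erase.mpr ⟨hSc, hS⟩)
    have hdisj : (fun T => Trans (G.erase c) U T ∧ Disjoint T c) = Trans (G.erase c) (U \ c) := by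
      funext T
      apply propext
      unfold Trans
      rw [Finset.subset_sdiff]
      tauto
    rcases i with _ | i
    · -- the empty set does not meet `c`, so there are no chains in degree `0`
      intro f hf _
      refine ⟨0, fun T hT => absurd rfl hT, fun T hT => ?_⟩
      have : f T = 0 := by
        by_contra hne
        have h0 := (hf T hne).2
        rw [Finset.card_eq_zero] at h0
        subst h0
        exact hT.2 c hcG (by simp)
      rw [this]; simp [bd]
    rw [hsplit]
    apply exactAt_quot
    · rintro T S R hTS hSR ⟨_, h2⟩ ⟨h3, _⟩
      exact ⟨hSR.trans h3, fun S' hS' hd => h2 S' hS' (hd.mono_left hTS)⟩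
    · obtain ⟨p, hpc, hpU, hp⟩ := hpriv c (Finset.mem_insert_self _ _)
      apply exactAt_cone p
      intro T hT
      unfold Trans
      refine and_congr ?_ ?_
      · simp [Finset.insert_subset_iff, hpU]
      · refine forall₂_congr fun S hS => ?_
        have : p ∉ S := fun h => (Finset.mem_erase.mp hS).1 (hp S (Finset.mem_of_mem_erase hS) h)
        simp [Finset.disjoint_insert_left, this]
    · rw [hdisj]
      apply ih
      · intro S hS
        exact Finset.mem_erase.mpr
          ⟨fun h => hc (h ▸ hS), hCG (Finset.mem_insert_of_mem hS)⟩
      · intro S hS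
        obtain ⟨p, h1, h2, h3⟩ := hpriv S (Finset.mem_insert_of_mem hS)
        refine ⟨p, h1, Finset.mem_sdiff.mpr ⟨h2, fun h => ?_⟩,
          fun S' hS' => h3 S' (Finset.mem_of_mem_erase hS')⟩
        exact hc (h3 c hcG h ▸ hS)
      · rcases h with h | ⟨h1, h2⟩
        · left
          rw [Finset.card_insert_of_notMem hc] at h
          omega
        · right
          refine ⟨fun h => h1 (by rw [h, Finset.insert_erase hcG]), fun a ha => ?_⟩
          obtain ⟨ha1, ha2⟩ := Finset.mem_sdiff.mp ha
          obtain ⟨S, hS, haS⟩ := h2 a ha1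
          rcases Finset.mem_insert.mp hS with rfl | hS
          · exact absurd haS ha2
          · exact ⟨S, hS, haS⟩

end Combinatorics

/-! ### Multigraded strands of the Koszul complex -/

section Algebra

variable {σ : Type} [Fintype σ] [LinearOrder σ] {K : Type} [Field K]

/-- Extension by zero of a Koszul chain in one homological degree to all subsets. -/
noncomputable def ext0 {A : Type*} [Zero A] {i : ℕ} (c : KT σ i → A) (S : Finset σ) : A :=
  if h : S.card = i then c ⟨S, h⟩ else 0

/-- The Koszul differential is the simplicial differential twisted by the variables. For `i = 0`
both sides vanish. -/
lemma kd_apply_s8 (I : Ideal (MvPolynomial σ K)) (i : ℕ)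
    (c : KT σ i →₀ (MvPolynomial σ K ⧸ I)) (T : KT σ (i - 1)) :
    kd σ K I i c T = ∑ a ∈ T.1ᶜ, sg a T.1 • ((X a : MvPolynomial σ K) • ext0 c (insert a T.1)) := by
  unfold kd
  rw [Finsupp.sum_fintype _ _ (by intro T; simp)]
  rw [Finsupp.finsetSum_apply]
  have h1 : ∀ S : KT σ i, (∑ a ∈ S.1.attach,
      ((-1 : ℤ) ^ ((S.1.filter (fun b => b < a.1)).card)) •
      Finsupp.single
        (⟨S.1.erase a.1, by rw [Finset.card_erase_of_mem a.2, S.2]⟩ : KT σ (i - 1))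
        ((X a.1 : MvPolynomial σ K) • c S)) T
      = ∑ a ∈ T.1ᶜ, if S.1 = insert a T.1 then
          sg a T.1 • ((X a : MvPolynomial σ K) • c S) else 0 := by
    intro S
    rw [Finsupp.finsetSum_apply]
    have h2 : ∀ a ∈ S.1.attach, (((-1 : ℤ) ^ ((S.1.filter (fun b => b < a.1)).card)) •
      Finsupp.single
        (⟨S.1.erase a.1, by rw [Finset.card_erase_of_mem a.2, S.2]⟩ : KT σ (i - 1))
        ((X a.1 : MvPolynomial σ K) • c S)) T
        = (fun a : σ => if a ∉ T.1 ∧ S.1 = insert a T.1 then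
          sg a T.1 • ((X a : MvPolynomial σ K) • c S) else 0) a.1 := by
      rintro ⟨a, ha⟩ _
      rw [Finsupp.smul_apply, Finsupp.single_apply]
      beta_reduce
      by_cases h : S.1.erase a = T.1
      · have h3 : a ∉ T.1 := by rw [← h]; exact Finset.notMem_erase _ _
        have h4 : S.1 = insert a T.1 := by rw [← h, Finset.insert_erase ha]
        rw [if_pos (Subtype.ext h), if_pos ⟨h3, h4⟩]
        congr 1
        have h5 : S.1.filter (fun b => b < a) = T.1.filter (fun b => b < a) := by
          rw [h4, Finset.filter_insert, if_neg (lt_irrefl _)]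
        exact congrArg (fun s : Finset σ => (-1 : ℤ) ^ s.card) h5
      · rw [if_neg (fun h' => h (Subtype.ext_iff.mp h')), if_neg, smul_zero]
        rintro ⟨h3, h4⟩
        apply h
        rw [h4, Finset.erase_insert h3]
    rw [Finset.sum_congr rfl h2, Finset.sum_attach S.1 (fun a : σ =>
      if a ∉ T.1 ∧ S.1 = insert a T.1 then sg a T.1 • ((X a : MvPolynomial σ K) • c S) else 0), ← Finset.sum_filter, ← Finset.sum_filter]
    refine Finset.sum_congr ?_ fun _ _ => rfl
    ext a
    simp only [mem_filter, mem_compl]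
    constructor
    · tauto
    · rintro ⟨h3, h4⟩
      exact ⟨by rw [h4]; simp, h3, h4⟩
  rw [Finset.sum_congr rfl fun S _ => h1 S, Finset.sum_comm]
  refine Finset.sum_congr rfl fun a _ => ?_
  unfold ext0
  split_ifs with h
  · rw [Finset.sum_eq_single (⟨insert a T.1, h⟩ : KT σ i)]
    · simp
    · intro S _ hS
      rw [if_neg]
      exact fun h' => hS (Subtype.ext h')
    · simp
  · rw [smul_zero, smul_zero]
    refine Finset.sum_eq_zero fun S _ => ?_
    rw [if_neg]
    exact fun h' => h (h' ▸ S.2)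

/-- The exponent vector of the square-free monomial with support `T`. -/
noncomputable def oneOn (T : Finset σ) : σ →₀ ℕ := ∑ a ∈ T, Finsupp.single a 1

lemma oneOn_apply (T : Finset σ) (a : σ) : oneOn T a = if a ∈ T then 1 else 0 := by
  simp [oneOn, Finsupp.finsetSum_apply, Finsupp.single_apply]

lemma oneOn_le {T : Finset σ} {m : σ →₀ ℕ} : oneOn T ≤ m ↔ T ⊆ m.support := by
  rw [Finsupp.le_def]
  constructor
  · intro h a ha
    have := h a
    rw [oneOn_apply, if_pos ha] at this
    rw [Finsupp.mem_support_iff]; omega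
  · intro h a
    rw [oneOn_apply]
    split_ifs with ha
    · have := Finsupp.mem_support_iff.mp (h ha)
      omega
    · omega

lemma oneOn_insert {T : Finset σ} {a : σ} (ha : a ∉ T) :
    oneOn (insert a T) = oneOn T + Finsupp.single a 1 := by
  unfold oneOn
  rw [Finset.sum_insert ha, add_comm]

lemma degree_oneOn (T : Finset σ) : (oneOn T).degree = T.card := by
  simp [oneOn, map_sum]

/-- The monomial with exponent vector `n` lies in the ideal generated by the supports in `G`. -/
def InI (G : Finset (Finset σ)) (n : σ →₀ ℕ) : Prop := ∃ S ∈ G, S ⊆ n.support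

lemma mem_monIdeal (G : Finset (Finset σ)) (p : MvPolynomial σ K) :
    p ∈ monIdeal σ K G ↔ ∀ n, ¬ InI G n → coeff n p = 0 := by
  have h : monIdeal σ K G
      = Ideal.span ((fun s => monomial s (1 : K)) '' (oneOn '' (G : Set (Finset σ)))) := by
    unfold monIdeal
    rw [Set.image_image]
    congr 1
    refine Set.image_congr fun S _ => ?_
    unfold sqMon oneOn
    rw [monomial_sum_one]
    rfl
  rw [h, mem_ideal_span_monomial_image]
  refine forall_congr' fun n => ?_
  rw [mem_support_iff]
  unfold InI
  simp only [Set.mem_image, Finset.mem_coe, exists_exists_and_eq_and, oneOn_le]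
  rw [not_imp_comm]

/-- The sets `T` for which `x^(m - 1_T) e_T` is a nonzero basis element of the strand of
multidegree `m` in the Koszul complex over `R/I`. -/
def Strand (G : Finset (Finset σ)) (m : σ →₀ ℕ) (T : Finset σ) : Prop :=
  T ⊆ m.support ∧ ¬ InI G (m - oneOn T)

/-- Coefficients of the differential of a chain `B` of polynomials, at the set `T`. -/
lemma coeff_bd (n : σ →₀ ℕ) (T : Finset σ) (B : Finset σ → MvPolynomial σ K) :
    coeff n (∑ a ∈ Tᶜ, sg a T • (X a * B (insert a T)))
      = ∑ a ∈ Tᶜ, sg a T • (if a ∈ n.support then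
          coeff (n - Finsupp.single a 1) (B (insert a T)) else 0) := by
  rw [coeff_sum]
  refine Finset.sum_congr rfl fun a _ => ?_
  rw [← coeff_X_mul']
  exact map_zsmul (coeffAddMonoidHom n) _ _

/-- A cycle of homological degree `i`, homogeneous with coefficients of degree `e`, is a boundary
if all strands of total degree `e + i` are exact at `i`: lift the cycle to polynomials, read off its
component in each multidegree `m`, bound each component inside its strand, and add up. -/
lemma boundary_of_strands (G : Finset (Finset σ)) (i e : ℕ)
    (c : KT σ i →₀ (MvPolynomial σ K ⧸ monIdeal σ K G))
    (hc : ∀ T, ∃ p : MvPolynomial σ K, p.IsHomogeneous e ∧ Ideal.Quotient.mk _ p = c T)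
    (hcyc : kd σ K _ i c = 0)
    (hex : ∀ m : σ →₀ ℕ, m.degree = e + i → ExactAt K (Strand G m) i) :
    ∃ b, kd σ K (monIdeal σ K G) (i + 1) b = c := by
  choose p hph hpc using hc
  have hlift : ∀ {k : ℕ} (q : KT σ k → MvPolynomial σ K)
      (c : KT σ k →₀ (MvPolynomial σ K ⧸ monIdeal σ K G)),
      (∀ T, Ideal.Quotient.mk _ (q T) = c T) → ∀ T : Finset σ,
      (∑ a ∈ Tᶜ, sg a T • ((X a : MvPolynomial σ K) • ext0 c (insert a T))) =
        Ideal.Quotient.mk (monIdeal σ K G)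
          (∑ a ∈ Tᶜ, sg a T • (X a * ext0 q (insert a T))) := by
    intro k q c h T
    rw [map_sum]
    refine Finset.sum_congr rfl fun a _ => ?_
    have h1 : ext0 c (insert a T) = Ideal.Quotient.mk _ (ext0 q (insert a T)) := by
      unfold ext0
      split_ifs
      · exact (h _).symm
      · rw [map_zero]
    rw [map_zsmul, h1]
    rfl
  have key : ∀ m : σ →₀ ℕ, ∃ g : Finset σ → K,
      (∀ T, g T ≠ 0 → Strand G m T ∧ T.card = i + 1 ∧ m.degree = e + i) ∧
      ∀ T : KT σ i, Strand G m T → bd g T = coeff (m - oneOn T.1) (p T) := by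
    intro m
    by_cases hm : m.degree = e + i
    · obtain ⟨g, hg, hg'⟩ : ∃ g : Finset σ → K,
          (∀ T, g T ≠ 0 → Strand G m T ∧ T.card = i + 1) ∧ ∀ T, Strand G m T → bd g T =
            if Strand G m T then coeff (m - oneOn T) (ext0 p T) else 0 := by
        apply hex m hm (fun T => if Strand G m T then coeff (m - oneOn T) (ext0 p T) else 0)
        · intro T hT
          by_cases h : Strand G m T
          · refine ⟨h, ?_⟩
            by_contra hcard
            rw [if_pos h, ext0, dif_neg hcard, coeff_zero] at hT
            exact hT rfl
          · rw [if_neg h] at hT; exact absurd rfl hT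
        · intro T hT
          -- if `|T| ≠ i - 1`, or if `i = 0`, every `insert a T` has size different from `i`
          by_cases hcard : T.card = i - 1
          · have h1 := kd_apply_s8 _ i c ⟨T, hcard⟩
            rw [hcyc, hlift p c hpc T, Finsupp.zero_apply, eq_comm, Ideal.Quotient.eq_zero_iff_mem,
              mem_monIdeal] at h1
            have h2 := h1 _ hT.2
            rw [coeff_bd] at h2
            refine Eq.trans ?_ h2
            unfold bd
            refine Finset.sum_congr rfl fun a ha => ?_
            have ha : a ∉ T := by simpa using ha
            have hsupp : a ∈ (m - oneOn T).support ↔ a ∈ m.support := by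
              simp [oneOn_apply, ha]
            congr 1
            beta_reduce
            have e1 : m - oneOn T - Finsupp.single a 1 = m - oneOn (insert a T) := by
              rw [oneOn_insert ha, tsub_add_eq_tsub_tsub]
            by_cases ham : a ∈ m.support
            · have h3 : Strand G m (insert a T) := by
                refine ⟨Finset.insert_subset ham hT.1, fun ⟨S, hS, hS'⟩ => hT.2 ⟨S, hS, ?_⟩⟩
                refine hS'.trans ?_
                rw [← e1]
                exact Finsupp.support_mono tsub_le_self
              rw [if_pos (hsupp.mpr ham), if_pos h3, e1]
            · rw [if_neg (fun h => ham (hsupp.mp h)), if_neg]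
              exact fun h => ham (h.1 (Finset.mem_insert_self _ _))
          · unfold bd
            refine Finset.sum_eq_zero fun a ha => ?_
            have ha : a ∉ T := by simpa using ha
            have : ext0 p (insert a T) = 0 := by
              unfold ext0
              rw [dif_neg]
              rw [Finset.card_insert_of_notMem ha]
              omega
            simp [this]
      refine ⟨g, fun T hT => ⟨(hg T hT).1, (hg T hT).2, hm⟩, fun T hT => ?_⟩
      rw [hg' T hT, if_pos hT, ext0, dif_pos T.2]
    · refine ⟨0, fun T hT => absurd rfl hT, fun T hT => ?_⟩
      have h0 : coeff (m - oneOn T.1) (p T) = 0 := by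
        by_contra hne
        have h2 : (m - oneOn T.1).degree = e := by
          rw [Finsupp.degree_eq_weight_one]
          exact hph T hne
        apply hm
        rw [← tsub_add_cancel_of_le (oneOn_le.mpr hT.1), map_add, h2, degree_oneOn, T.2]
      rw [h0]; simp [bd]
  choose g hg hg' using key
  -- only the finitely many exponent vectors of degree `e + i` contribute
  let M : Finset (σ →₀ ℕ) := Finset.univ.finsuppAntidiag (e + i)
  have hM : ∀ m : σ →₀ ℕ, m.degree = e + i → m ∈ M := by
    intro m hm
    rw [Finset.mem_finsuppAntidiag]
    exact ⟨by rw [← hm, Finsupp.degree_eq_sum], Finset.subset_univ _⟩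
  let B : Finset σ → MvPolynomial σ K := fun S => ∑ m ∈ M, monomial (m - oneOn S) (g m S)
  refine ⟨Finsupp.equivFunOnFinite.symm fun S => Ideal.Quotient.mk _ (B S.1), ?_⟩
  ext T
  have h1 := kd_apply_s8 (monIdeal σ K G) (i + 1)
    (Finsupp.equivFunOnFinite.symm fun S : KT σ (i + 1) => Ideal.Quotient.mk _ (B S.1)) T
  rw [hlift (fun S : KT σ (i + 1) => B S.1) _ (fun S => rfl) T.1] at h1
  rw [h1, ← hpc T, Ideal.Quotient.eq, mem_monIdeal]
  intro n hn
  rw [coeff_sub, coeff_bd, sub_eq_zero]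
  have hTc : T.1.card = i := T.2
  have e0 : n + oneOn T.1 - oneOn T.1 = n := add_tsub_cancel_right _ _
  have hS : Strand G (n + oneOn T.1) T.1 := by
    refine ⟨oneOn_le.mp le_add_self, ?_⟩
    rwa [e0]
  have h2 := hg' (n + oneOn T.1) T hS
  rw [e0] at h2
  rw [← h2]
  unfold bd
  refine Finset.sum_congr rfl fun a ha => ?_
  have ha : a ∉ T.1 := by simpa using ha
  congr 1
  have hB : ext0 (fun S : KT σ (i + 1) => B S.1) (insert a T.1) = B (insert a T.1) := by
    unfold ext0
    rw [dif_pos]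
    rw [Finset.card_insert_of_notMem ha, hTc]
  by_cases han : a ∈ n.support
  · have hle : Finsupp.single a 1 ≤ n := by
      rw [Finsupp.single_le_iff]
      have := Finsupp.mem_support_iff.mp han
      omega
    rw [if_pos han, hB, coeff_sum]
    simp only [coeff_monomial]
    rw [Finset.sum_eq_single (n + oneOn T.1)]
    · rw [if_pos]
      rw [oneOn_insert ha, tsub_add_eq_tsub_tsub, e0]
    · intro m _ hne
      split_ifs with heq
      · by_contra h0
        have h3 := oneOn_le.mpr (hg m _ h0).1.1
        apply hne
        rw [← tsub_add_cancel_of_le h3, heq, oneOn_insert ha, add_comm (oneOn _), ← add_assoc,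
          tsub_add_cancel_of_le hle]
      · rfl
    · intro hm
      have : g (n + oneOn T.1) (insert a T.1) = 0 := by
        by_contra h0
        exact hm (hM _ (hg _ _ h0).2.2)
      simp [this]
  · rw [if_neg han]
    symm
    by_contra h0
    have h3 := (hg _ _ h0).1.1 (Finset.mem_insert_self a T.1)
    apply han
    simpa [oneOn_apply, ha] using h3

end Algebra

/-! ### Consequences of isolated open vertices -/

section Isolated

variable {σ : Type} [Fintype σ] [LinearOrder σ]

/-- A closed vertex has a private variable. -/
lemma Closed.exists_private {G : Finset (Finset σ)} {v : Finset σ} (h : Closed σ G v) :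
    ∃ a ∈ v, ∀ S ∈ G, a ∈ S → S = v := by
  obtain ⟨a, ha⟩ := h
  refine ⟨a, ?_, fun S hS haS => ?_⟩
  · have : v ∈ EdgeOf σ G a := by rw [ha]; simp
    exact (Finset.mem_filter.mp this).2
  · have : S ∈ EdgeOf σ G a := Finset.mem_filter.mpr ⟨hS, haS⟩
    rw [ha] at this
    simpa using this

/-- Two distinct vertices sharing a variable cannot both be open. -/
lemma closed_of_shared {G : Finset (Finset σ)}
    (hiso : ∀ v ∈ G, ¬ Closed σ G v → ∀ w ∈ Neighbors σ G v, Closed σ G w)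
    {v w : Finset σ} (hv : v ∈ G) (hw : w ∈ G) (hvw : w ≠ v) {a : σ} (hav : a ∈ v) (haw : a ∈ w)
    (hopen : ¬ Closed σ G v) : Closed σ G w :=
  hiso v hv hopen w (Finset.mem_filter.mpr ⟨hw, hvw, a, Finset.mem_filter.mpr ⟨hv, hav⟩,
    Finset.mem_filter.mpr ⟨hw, haw⟩⟩)

/-- A non-exact strand of the Koszul complex lives in a square-free multidegree which is the union
`U` of the members of `G` it contains, and in homological degree at least the number of them. -/
lemma strand_not_exact (A : Type*) [AddCommGroup A] {G : Finset (Finset σ)}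
    (hiso : ∀ v ∈ G, ¬ Closed σ G v → ∀ w ∈ Neighbors σ G v, Closed σ G w)
    (m : σ →₀ ℕ) (i : ℕ) (hne : ¬ ExactAt A (Strand G m) i) :
    m.degree = m.support.card ∧ (∀ a ∈ m.support, ∃ S ∈ G, S ⊆ m.support ∧ a ∈ S) ∧
      (G.filter (· ⊆ m.support)).card ≤ i := by
  -- a variable of exponent at least `2` is still present after removing one copy of it
  have hle : ∀ a, m a ≤ 1 := by
    intro a
    by_contra! ha
    apply hne
    apply exactAt_cone a
    intro T hT
    unfold Strand InI
    have h1 : (m - oneOn (insert a T)).support = (m - oneOn T).support := by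
      ext b
      rw [Finsupp.mem_support_iff, Finsupp.mem_support_iff, Finsupp.tsub_apply, Finsupp.tsub_apply,
        oneOn_apply, oneOn_apply]
      by_cases hb : b = a
      · subst hb
        simp [hT]
        omega
      · simp [hb]
    have h2 : a ∈ m.support := by rw [Finsupp.mem_support_iff]; omega
    rw [h1, Finset.insert_subset_iff]
    simp only [h2, true_and]
  -- a variable outside all generators dividing `x^m` does not affect membership in the ideal
  have hcov : ∀ a ∈ m.support, ∃ S ∈ G, S ⊆ m.support ∧ a ∈ S := by
    intro a ha
    by_contra! hno
    apply hne
    apply exactAt_cone a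
    intro T hT
    unfold Strand InI
    rw [Finset.insert_subset_iff]
    simp only [ha, true_and]
    refine and_congr Iff.rfl (not_congr (exists_congr fun S => and_congr_right fun hS => ?_))
    have hmono : ∀ T, (m - oneOn T).support ⊆ m.support := fun T =>
      Finsupp.support_mono tsub_le_self
    have heq : ∀ b, b ≠ a → (b ∈ (m - oneOn T).support ↔ b ∈ (m - oneOn (insert a T)).support) := by
      intro b hb
      simp [oneOn_apply, hb]
    constructor
    · intro h b hb
      exact (heq b (fun h' => hno S hS (h.trans (hmono _)) (h' ▸ hb))).mp (h hb)
    · intro h b hb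
      exact (heq b (fun h' => hno S hS (h.trans (hmono _)) (h' ▸ hb))).mpr (h hb)
  refine ⟨?_, hcov, ?_⟩
  · rw [Finsupp.degree_apply, Finset.card_eq_sum_ones]
    refine Finset.sum_congr rfl fun a ha => ?_
    have := hle a
    have := Finsupp.mem_support_iff.mp ha
    omega
  by_contra! hlt
  apply hne
  set U := m.support with hU
  have hstrand : Strand G m = Trans (G.filter (· ⊆ U)) U := by
    funext T
    apply propext
    unfold Strand Trans InI
    have h1 : (m - oneOn T).support = U \ T := by
      ext b
      rw [Finsupp.mem_support_iff, Finsupp.tsub_apply, oneOn_apply, Finset.mem_sdiff, hU,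
        Finsupp.mem_support_iff]
      have := hle b
      split_ifs with hb
      · simp [hb]; omega
      · simp [hb]
    rw [h1]
    refine and_congr Iff.rfl ?_
    simp only [Finset.subset_sdiff, mem_filter, not_exists, not_and, and_imp]
    exact forall₃_congr fun S _ _ => by rw [disjoint_comm]
  rw [hstrand]
  -- apply the exactness criterion to the members which are closed within the restricted family
  refine exactAt_trans ((G.filter (· ⊆ U)).filter
    (fun S => ∃ p ∈ S, ∀ S' ∈ G.filter (· ⊆ U), p ∈ S' → S' = S)) _ _ _
    (Finset.filter_subset _ _) ?_ ?_
  · intro S hS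
    obtain ⟨h1, p, h2, h3⟩ := Finset.mem_filter.mp hS
    exact ⟨p, h2, (Finset.mem_filter.mp h1).2 h2, h3⟩
  · by_cases hC : (G.filter (· ⊆ U)).filter
        (fun S => ∃ p ∈ S, ∀ S' ∈ G.filter (· ⊆ U), p ∈ S' → S' = S) = G.filter (· ⊆ U)
    · left
      rwa [hC]
    · refine Or.inr ⟨hC, fun a ha => ?_⟩
      obtain ⟨S, hS, hSU, haS⟩ := hcov a ha
      have hSG : S ∈ G.filter (· ⊆ U) := Finset.mem_filter.mpr ⟨hS, hSU⟩
      by_cases hSc : ∃ p ∈ S, ∀ S' ∈ G.filter (· ⊆ U), p ∈ S' → S' = S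
      · exact ⟨S, Finset.mem_filter.mpr ⟨hSG, hSc⟩, haS⟩
      · -- `S` is open, so any other member containing `a` is closed
        have hop : ¬ Closed σ G S := fun h => hSc (by
          obtain ⟨p, hp, hp'⟩ := h.exists_private
          exact ⟨p, hp, fun S' hS' => hp' S' (Finset.mem_filter.mp hS').1⟩)
        push Not at hSc
        obtain ⟨S', hS', haS', hneS⟩ := hSc a haS
        obtain ⟨p, hp, hp'⟩ := (closed_of_shared hiso hS (Finset.mem_filter.mp hS').1 hneS haS haS'
          hop).exists_private
        exact ⟨S', Finset.mem_filter.mpr ⟨hS', p, hp,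
          fun S'' hS'' => hp' S'' (Finset.mem_filter.mp hS'').1⟩, haS'⟩

/-- Restricting to the generators contained in a union `U` of generators cannot increase the
number of variables minus the number of generators: each generator outside `U` owns a variable
outside `U`. -/
lemma card_restrict {G : Finset (Finset σ)}
    (hiso : ∀ v ∈ G, ¬ Closed σ G v → ∀ w ∈ Neighbors σ G v, Closed σ G w)
    (U : Finset σ) (hU : ∀ a ∈ U, ∃ S ∈ G, S ⊆ U ∧ a ∈ S) :
    G.card + U.card ≤ (varsOf σ G).card + (G.filter (· ⊆ U)).card := by
  -- The owned variable is a private one if `S` is closed. It is chosen as a constant function of a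
  -- dummy argument `d`, so that the choice also makes sense for empty `σ`.
  have hchoice : ∀ S : Finset σ, ∃ a : σ → σ, S ∈ G → ¬ S ⊆ U → ∀ d,
      a d ∈ S ∧ a d ∉ U ∧ (Closed σ G S → ∀ S' ∈ G, a d ∈ S' → S' = S) := by
    intro S
    by_cases h : S ∈ G ∧ ¬ S ⊆ U
    · by_cases hc : Closed σ G S
      · obtain ⟨p, hp, hp'⟩ := hc.exists_private
        refine ⟨fun _ => p, fun _ _ _ => ⟨hp, fun hpU => ?_, fun _ => hp'⟩⟩
        obtain ⟨S', hS', hS'U, hpS'⟩ := hU p hpU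
        exact h.2 (hp' S' hS' hpS' ▸ hS'U)
      · obtain ⟨p, hp, hp'⟩ := Finset.not_subset.mp h.2
        exact ⟨fun _ => p, fun _ _ _ => ⟨hp, hp', fun h => absurd h hc⟩⟩
    · exact ⟨id, fun h1 h2 => absurd ⟨h1, h2⟩ h⟩
  choose φ hφ using hchoice
  have hUX : U ⊆ varsOf σ G := by
    intro a ha
    obtain ⟨S, hS, _, haS⟩ := hU a ha
    exact Finset.mem_biUnion.mpr ⟨S, hS, haS⟩
  rcases isEmpty_or_nonempty σ with hσ | ⟨⟨d⟩⟩
  · have hf : G.filter (· ⊆ U) = G := by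
      refine Finset.filter_true_of_mem fun S _ a _ => isEmptyElim a
    rw [hf, add_comm]
    exact Nat.add_le_add_right (Finset.card_le_card hUX) _
  have hinj : (G.filter (fun S => ¬ S ⊆ U)).card ≤ (varsOf σ G \ U).card := by
    refine Finset.card_le_card_of_injOn (fun S => φ S d) ?_ ?_
    · intro S hS
      obtain ⟨h1, h2⟩ := Finset.mem_filter.mp hS
      obtain ⟨h3, h4, _⟩ := hφ S h1 h2 d
      exact Finset.mem_coe.mpr (Finset.mem_sdiff.mpr ⟨Finset.mem_biUnion.mpr ⟨S, h1, h3⟩, h4⟩)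
    · intro S hS S' hS' heq
      obtain ⟨h1, h2⟩ := Finset.mem_filter.mp (Finset.mem_coe.mp hS)
      obtain ⟨h1', h2'⟩ := Finset.mem_filter.mp (Finset.mem_coe.mp hS')
      obtain ⟨h3, _, h5⟩ := hφ S h1 h2 d
      obtain ⟨h3', _, h5'⟩ := hφ S' h1' h2' d
      beta_reduce at heq
      by_contra hne
      by_cases hc : Closed σ G S
      · exact hne (h5 hc S' h1' (heq ▸ h3')).symm
      · have hc' := closed_of_shared hiso h1 h1' (Ne.symm hne) h3 (heq ▸ h3') hc
        exact hne (h5' hc' S h1 (heq ▸ h3))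
  have h1 := Finset.card_filter_add_card_filter_not (s := G) (fun S => S ⊆ U)
  have h2 := Finset.card_sdiff_add_card_eq_card hUX
  omega

end Isolated

end SqfreeHyp

open SqfreeHyp

/-- Theorem `Tiso`: if the labeled hypergraph of the
square-free monomial ideal `I` (minimal generating supports `G`) has only
isolated open vertices (every neighbor of every open vertex is closed), then
`reg(R/I) ≤ |X| − |V|`. -/
theorem stmt_8 (σ : Type) [Fintype σ] [LinearOrder σ] (K : Type) [Field K]
    (G : Finset (Finset σ)) (hmin : MinGens σ G) (hne : ∀ S ∈ G, S.Nonempty)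
    (hiso : ∀ v ∈ G, ¬ Closed σ G v → ∀ w ∈ Neighbors σ G v, Closed σ G w) :
    reg σ K (monIdeal σ K G) ≤ ((varsOf σ G).card : ℤ) - (G.card : ℤ) := by
  have hbound : ∀ d ∈ { d : ℤ | ∃ i j : ℕ, BettiNe σ K (monIdeal σ K G) i j ∧
      d = (j : ℤ) - (i : ℤ) }, d ≤ ((varsOf σ G).card : ℤ) - (G.card : ℤ) := by
    rintro d ⟨i, j, ⟨c, hc, hcyc, hnb⟩, rfl⟩
    have hex : ∃ m : σ →₀ ℕ, m.degree = j - i + i ∧ ¬ ExactAt K (Strand G m) i := by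
      by_contra! h
      obtain ⟨b, hb⟩ := boundary_of_strands G i (j - i) c hc hcyc h
      exact hnb b hb
    obtain ⟨m, hm, hne'⟩ := hex
    obtain ⟨h1, h2, h3⟩ := strand_not_exact K hiso m i hne'
    have h4 := card_restrict hiso m.support h2
    omega
  unfold reg
  rcases Set.eq_empty_or_nonempty { d : ℤ | ∃ i j : ℕ, BettiNe σ K (monIdeal σ K G) i j ∧
      d = (j : ℤ) - (i : ℤ) } with h | h
  · -- the supremum of the empty set is `0`, and `|V| ≤ |X|` holds in any case
    rw [h, Int.csSup_empty]
    have h4 := card_restrict hiso ∅ (by simp)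
    have h5 : G.filter (· ⊆ ∅) = ∅ := by
      refine Finset.filter_false_of_mem fun S hS h => ?_
      exact (hne S hS).ne_empty (Finset.subset_empty.mp h)
    rw [h5] at h4
    simp only [Finset.card_empty] at h4
    omega
  · exact csSup_le h hbound
end
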